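/- arXiv:1707.09854 — 2 statements merged into one kernel-verified Lean document; each statement's English description precedes it below -/
import Mathlib

section
/- Let R be a commutative ring, H ◁ R an ideal of finite index, d ≥ 3, and assume E_d(R) = SL_d(R). Then the relative K-group SK₁(R, H; d) = SL_d(R,H)/E_d(R,H) is a finite group. -/
open Matrix

/-- `E_d(R)`: the subgroup of `SL_d(R)` generated by the elementary matrices
`I_d + rE_{i,j}` (`i ≠ j`, `r ∈ R`). -/
def Esub (R : Type*) [CommRing R] (d : ℕ) : Subgroup (SpecialLinearGroup (Fin d) R) :=
  Subgroup.closure {M | ∃ (i j : Fin d) (c : R), i ≠ j ∧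
    (M : Matrix (Fin d) (Fin d) R) = Matrix.transvection i j c}

/-- `E_d(R,H)`: the normal subgroup of `E_d(R)` generated (as a normal subgroup of
`E_d(R)`) by the elementary matrices `I_d + hE_{i,j}` with `h ∈ H`. -/
def EHsub (R : Type*) [CommRing R] (d : ℕ) (H : Ideal R) :
    Subgroup (SpecialLinearGroup (Fin d) R) :=
  Subgroup.closure {M | ∃ g ∈ Esub R d, ∃ s : SpecialLinearGroup (Fin d) R,
    (∃ (i j : Fin d) (c : R), i ≠ j ∧ c ∈ H ∧
      (s : Matrix (Fin d) (Fin d) R) = Matrix.transvection i j c) ∧ M = g * s * g⁻¹}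

/-- `SL_d(R,H) = ker(SL_d(R) → SL_d(R/H))`. -/
def SLrel (R : Type*) [CommRing R] (d : ℕ) (H : Ideal R) :
    Subgroup (SpecialLinearGroup (Fin d) R) :=
  MonoidHom.ker (SpecialLinearGroup.map (n := Fin d) (Ideal.Quotient.mk H))

namespace SKaux

open scoped commutatorElement

/-- monoid of products of elementary matrices -/
def Emon (D : Type*) [CommRing D] (d : ℕ) : Submonoid (Matrix (Fin d) (Fin d) D) :=
  Submonoid.closure {M | ∃ (i j : Fin d) (c : D), i ≠ j ∧ M = Matrix.transvection i j c}

variable {D : Type*} [CommRing D] {d : ℕ}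

lemma tr_mem {i j : Fin d} (h : i ≠ j) (c : D) : Matrix.transvection i j c ∈ Emon D d :=
  Submonoid.subset_closure ⟨i, j, c, h, rfl⟩

/-- Additivity over orthogonal families. -/
lemma sum_mem {ι : Type*} (s : Finset ι) (A : ι → Matrix (Fin d) (Fin d) D)
    (h0 : ∀ i ∈ s, ∀ j ∈ s, A i * A j = 0) (h : ∀ i ∈ s, 1 + A i ∈ Emon D d) :
    1 + ∑ i ∈ s, A i ∈ Emon D d := by
  classical
  induction s using Finset.induction_on with
  | empty => simp
  | insert a s ha ih =>
    have h1 : 1 + ∑ i ∈ insert a s, A i = (1 + A a) * (1 + ∑ i ∈ s, A i) := by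
      have h2 : A a * ∑ i ∈ s, A i = 0 := by
        rw [Finset.mul_sum]
        exact Finset.sum_eq_zero fun i hi => h0 a (by simp) i (by simp [hi])
      rw [Finset.sum_insert ha, add_mul, mul_add, mul_add, h2]
      simp only [one_mul, mul_one]; abel
    rw [h1]
    refine mul_mem (h a (by simp)) (ih ?_ ?_)
    · intro i hi j hj; exact h0 i (by simp [hi]) j (by simp [hj])
    · intro i hi; exact h i (by simp [hi])

lemma row_mem (m : Fin d) (z : Fin d → D) (hz : z m = 0) :
    1 + vecMulVec (Pi.single m 1) z ∈ Emon D d := by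
  have : vecMulVec (Pi.single m 1) z = ∑ k ∈ Finset.univ.erase m, Matrix.single m k (z k) := by
    ext a b
    rw [Matrix.sum_apply, Finset.sum_erase _ (by simp [hz])]
    simp [vecMulVec_apply, Pi.single_apply, Matrix.single_apply]
    by_cases h : a = m 
    · simp [h]
    · have h2 : ¬ m = a := fun e => h e.symm
      simp [h, h2]
  rw [this]
  refine sum_mem _ _ ?_ ?_
  · intro i hi j hj
    simp at hi
    exact Matrix.single_mul_single_of_ne _ _ _ _ hi _
  · intro i hi
    simp at hi
    exact tr_mem (Ne.symm hi) _

lemma col_mem (m : Fin d) (z : Fin d → D) (hz : z m = 0) :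
    1 + vecMulVec z (Pi.single m 1) ∈ Emon D d := by
  have : vecMulVec z (Pi.single m 1) = ∑ k ∈ Finset.univ.erase m, Matrix.single k m (z k) := by
    ext a b
    rw [Matrix.sum_apply, Finset.sum_erase _ (by simp [hz])]
    simp [vecMulVec_apply, Pi.single_apply, Matrix.single_apply]
    by_cases h : b = m 
    · simp [h]
    · have h2 : ¬ m = b := fun e => h e.symm
      simp [h, h2]
  rw [this]
  refine sum_mem _ _ ?_ ?_
  · intro i hi j hj
    simp at hj
    exact Matrix.single_mul_single_of_ne _ _ _ _ (Ne.symm hj) _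
  · intro i hi
    simp at hi
    exact tr_mem hi _

lemma comm_id {S : Type*} [Ring S] (A B : S) (hA : A * A = 0) (hB : B * B = 0) (hBA : B * A = 0) :
    (1 + A) * (1 + B) * (1 + -A) * (1 + -B) = 1 + A * B := by
  have e1 : (1 + A) * (1 + B) = 1 + A + B + A * B := by noncomm_ring
  have e2 : (1 + -A) * (1 + -B) = 1 - A - B + A * B := by noncomm_ring
  have e3 : A * B * A = 0 := by rw [mul_assoc, hBA, mul_zero]
  have e4 : A * B * B = 0 := by rw [mul_assoc, hB, mul_zero]
  have e5 : A * A * B = 0 := by rw [hA, zero_mul]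
  have e6 : B * A * B = 0 := by rw [hBA, zero_mul]
  rw [mul_assoc, e1, e2]
  have : (1 + A + B + A * B) * (1 - A - B + A * B)
    = 1 + A * B - A * A - B * A - B * B + A * A * B + B * A * B - A * B * A - A * B * B
      + A * B * A * B := by noncomm_ring
  rw [this, e5, e6, e3, e4, hA, hB, hBA]; simp

lemma zero_coord_both (m : Fin d) (v z : Fin d → D) (hv : v m = 0) (hz : z m = 0)
    (h : z ⬝ᵥ v = 0) : 1 + vecMulVec v z ∈ Emon D d := by
  have key := comm_id (vecMulVec v (Pi.single m 1)) (vecMulVec (Pi.single m (1:D)) z)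
    (by simp [vecMulVec_mul_vecMulVec, hv]) (by simp [vecMulVec_mul_vecMulVec, hz])
    (by simp [vecMulVec_mul_vecMulVec, h])
  have e : vecMulVec v (Pi.single m 1) * vecMulVec (Pi.single m (1:D)) z = vecMulVec v z := by
    simp [vecMulVec_mul_vecMulVec]
  rw [e] at key
  rw [← key]
  refine mul_mem (mul_mem (mul_mem (col_mem m v hv) (row_mem m z hz)) ?_) ?_
  · rw [← neg_vecMulVec]; exact col_mem m (-v) (by simp [hv])
  · rw [← vecMulVec_neg]; exact row_mem m (-z) (by simp [hz])

lemma zero_coord (m : Fin d) (v z : Fin d → D) (hz : z m = 0)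
    (h : z ⬝ᵥ v = 0) : 1 + vecMulVec v z ∈ Emon D d := by
  set v' : Fin d → D := v - v m • Pi.single m 1 with hv'
  have h' : z ⬝ᵥ v' = 0 := by simp [hv', dotProduct_sub, h, hz]
  have e : 1 + vecMulVec v z =
      (1 + vecMulVec (Pi.single m 1) (v m • z)) * (1 + vecMulVec v' z) := by
    have e0 : vecMulVec (Pi.single m 1) (v m • z) * vecMulVec v' z = 0 := by
      simp [vecMulVec_mul_vecMulVec, h']
    rw [add_mul, mul_add, mul_add, e0]
    ext a b
    simp [vecMulVec_apply, hv']
    ring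
  rw [e]
  exact mul_mem (row_mem m _ (by simp [hz])) (zero_coord_both m v' z (by simp [hv']) hz h')

lemma exists_third (hd : 3 ≤ d) (k l : Fin d) : ∃ m : Fin d, m ≠ k ∧ m ≠ l := by
  have : ∃ m ∈ (Finset.univ : Finset (Fin d)), m ∉ ({k, l} : Finset (Fin d)) := by
    apply Finset.exists_mem_notMem_of_card_lt_card
    have := Finset.card_le_two (a := k) (b := l)
    simp only [Finset.card_univ, Fintype.card_fin]
    omega
  obtain ⟨m, -, hm⟩ := this
  simp at hm
  exact ⟨m, hm⟩

lemma suslin_vec (hd : 3 ≤ d) (v y u : Fin d → D) (hy : y ⬝ᵥ v = 0) (hu : u ⬝ᵥ v = 1) :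
    1 + vecMulVec v y ∈ Emon D d := by
  -- ordered pairs: y = ∑_{k,l} y_k u_l (v_l e_k - v_k e_l)
  let z : Fin d × Fin d → (Fin d → D) := fun p =>
    (y p.1 * u p.2) • (v p.2 • Pi.single p.1 1 - v p.1 • Pi.single p.2 1)
  have hz : ∀ p, z p ⬝ᵥ v = 0 := by
    intro p
    simp [z, sub_dotProduct]
    ring
  have hsum : vecMulVec v y = ∑ p, vecMulVec v (z p) := by
    ext a b
    rw [Matrix.sum_apply]
    simp only [vecMulVec_apply, ← Finset.mul_sum]
    congr 1
    simp only [z, Pi.smul_apply, Pi.sub_apply, smul_eq_mul, mul_sub, Finset.sum_sub_distrib,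
      Fintype.sum_prod_type, Pi.single_apply]
    have hu' : ∑ x, u x * v x = 1 := hu
    have hy' : ∑ x, y x * v x = 0 := hy
    have e1 : ∑ x, ∑ x_1, y x * u x_1 * (v x_1 * if b = x then 1 else 0) = y b := by
      rw [Finset.sum_eq_single b]
      · simp only [if_true, mul_one, mul_assoc, ← Finset.mul_sum, hu']
      · intro c _ hc; simp [Ne.symm hc]
      · simp
    have e2 : ∑ x, ∑ x_1, y x * u x_1 * (v x * if b = x_1 then 1 else 0) = 0 := by
      have : ∀ x, ∑ x_1, y x * u x_1 * (v x * if b = x_1 then 1 else 0) = u b * (y x * v x) := by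
        intro x
        simp; ring
      simp only [this, ← Finset.mul_sum, hy', mul_zero]
    rw [e1, e2, sub_zero]
  rw [hsum]
  refine sum_mem _ _ ?_ ?_
  · intro p _ q _
    simp [vecMulVec_mul_vecMulVec, hz]
  · intro p _
    obtain ⟨m, h1, h2⟩ := exists_third hd p.1 p.2
    exact zero_coord m v (z p) (by simp [z, h1, h2]) (hz p)

lemma suslin (hd : 3 ≤ d) (g g' : Matrix (Fin d) (Fin d) D) (h : g * g' = 1) (h' : g' * g = 1)
    (i j : Fin d) (hij : i ≠ j) (c : D) : g * Matrix.transvection i j c * g' ∈ Emon D d := by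
  have e : g * Matrix.transvection i j c * g' = 1 + vecMulVec (g.col i) (c • g'.row j) := by
    rw [Matrix.transvection, mul_add, add_mul, mul_one, h]
    congr 1
    ext a b
    simp only [Matrix.mul_apply, vecMulVec_apply, Matrix.col_apply, Matrix.row_apply,
      Pi.smul_apply, smul_eq_mul, Matrix.single_apply]
    rw [Finset.sum_eq_single j, Finset.sum_eq_single i]
    · simp; ring
    · intro k _ hk; simp [Ne.symm hk]
    · simp
    · intro k _ hk; simp [Ne.symm hk]
    · simp
  rw [e]
  have f : ∀ k, g'.row k ⬝ᵥ g.col i = (1 : Matrix (Fin d) (Fin d) D) k i := by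
    intro k; rw [← h']; rfl
  exact suslin_vec hd _ _ (g'.row i) (by simp [f, hij.symm]) (by simp [f])

variable {R : Type*} [CommRing R] (H : Ideal R)

/-- the double of `R` along `H` -/
def dbl : Subring (R × R) :=
  RingHom.eqLocus ((Ideal.Quotient.mk H).comp (RingHom.fst R R))
    ((Ideal.Quotient.mk H).comp (RingHom.snd R R))

/-- first projection -/
def p1 : dbl H →+* R := (RingHom.fst R R).comp (dbl H).subtype
/-- second projection -/
def p2 : dbl H →+* R := (RingHom.snd R R).comp (dbl H).subtype

/-- elementary matrix in `SL` -/
def el {i j : Fin d} (h : i ≠ j) (c : R) : SpecialLinearGroup (Fin d) R :=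
  ⟨Matrix.transvection i j c, Matrix.det_transvection_of_ne i j h c⟩

lemma el_mem_EH {i j : Fin d} (h : i ≠ j) {c : R} (hc : c ∈ H) : el h c ∈ EHsub R d H :=
  Subgroup.subset_closure ⟨1, one_mem _, el h c, ⟨i, j, c, h, hc, rfl⟩, by simp⟩

lemma el_mul {i j : Fin d} (h : i ≠ j) (a b : R) : el h a * el h b = el h (a + b) := by
  apply Subtype.ext
  exact Matrix.transvection_mul_transvection_same i j h a b

lemma el_inv {i j : Fin d} (h : i ≠ j) (a : R) : (el h a)⁻¹ = el h (-a) := by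
  rw [inv_eq_iff_mul_eq_one, el_mul]
  apply Subtype.ext
  simp [el]

lemma EH_normal (hE : Esub R d = ⊤) : (EHsub R d H).Normal := by
  constructor
  intro n hn g
  induction hn using Subgroup.closure_induction with
  | mem x hx =>
    obtain ⟨a, -, s, hs, rfl⟩ := hx
    refine Subgroup.subset_closure ⟨g * a, by simp [hE], s, hs, by group⟩
  | one => simp
  | mul x y _ _ hx hy =>
    have : g * (x * y) * g⁻¹ = (g * x * g⁻¹) * (g * y * g⁻¹) := by group
    rw [this]; exact mul_mem hx hy
  | inv x _ hx =>
    have : g * x⁻¹ * g⁻¹ = (g * x * g⁻¹)⁻¹ := by group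
    rw [this]; exact inv_mem hx

lemma map_tr {A B : Type*} [CommRing A] [CommRing B] (f : A →+* B) (i j : Fin d) (c : A) :
    (Matrix.transvection i j c).map f = Matrix.transvection i j (f c) := by
  ext a b
  simp [Matrix.transvection, Matrix.one_apply, Matrix.single_apply, apply_ite f]

lemma dbl_rel (hE : Esub R d = ⊤) (M : Matrix (Fin d) (Fin d) (dbl H)) (hM : M ∈ Emon (dbl H) d) :
    ∃ a b : SpecialLinearGroup (Fin d) R, (a : Matrix (Fin d) (Fin d) R) = M.map (p1 H) ∧
      (b : Matrix (Fin d) (Fin d) R) = M.map (p2 H) ∧ a * b⁻¹ ∈ EHsub R d H := by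
  induction hM using Submonoid.closure_induction with
  | mem x hx =>
    obtain ⟨i, j, c, h, rfl⟩ := hx
    refine ⟨el h (p1 H c), el h (p2 H c), (map_tr _ _ _ _).symm, (map_tr _ _ _ _).symm, ?_⟩
    rw [el_inv, el_mul]
    apply el_mem_EH
    have := c.2
    rw [← sub_eq_add_neg, ← Ideal.Quotient.eq]
    exact this
  | one => exact ⟨1, 1, by simp, by simp, by simp⟩
  | mul x y _ _ hx hy =>
    obtain ⟨a, b, ha, hb, hab⟩ := hx
    obtain ⟨a', b', ha', hb', hab'⟩ := hy
    refine ⟨a * a', b * b', ?_, ?_, ?_⟩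
    · rw [Matrix.map_mul, ← ha, ← ha']; rfl
    · rw [Matrix.map_mul, ← hb, ← hb']; rfl
    · have : a * a' * (b * b')⁻¹ = (a * (a' * b'⁻¹) * a⁻¹) * (a * b⁻¹) := by group
      rw [this]
      exact mul_mem ((EH_normal H hE).conj_mem _ hab' a) hab

/-- lift `(g,1)` to the double -/
def lft (g : SpecialLinearGroup (Fin d) R) (hg : g ∈ SLrel R d H) :
    Matrix (Fin d) (Fin d) (dbl H) := fun i j =>
  ⟨(g i j, (1 : Matrix (Fin d) (Fin d) R) i j), by
    have h1 : SpecialLinearGroup.map (Ideal.Quotient.mk H) g = 1 := hg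
    have := congrArg (fun x : SpecialLinearGroup (Fin d) (R ⧸ H) => x i j) h1
    change Ideal.Quotient.mk H (g i j) = Ideal.Quotient.mk H ((1 : Matrix (Fin d) (Fin d) R) i j)
    have e : Ideal.Quotient.mk H (g i j) = (1 : Matrix (Fin d) (Fin d) (R ⧸ H)) i j := this
    rw [e]
    simp [Matrix.one_apply, apply_ite (Ideal.Quotient.mk H)]⟩

lemma lft_p1 (g : SpecialLinearGroup (Fin d) R) (hg : g ∈ SLrel R d H) :
    (lft H g hg).map (p1 H) = g := rfl
lemma lft_p2 (g : SpecialLinearGroup (Fin d) R) (hg : g ∈ SLrel R d H) :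
    (lft H g hg).map (p2 H) = 1 := rfl

lemma dbl_ext {M N : Matrix (Fin d) (Fin d) (dbl H)} (h1 : M.map (p1 H) = N.map (p1 H))
    (h2 : M.map (p2 H) = N.map (p2 H)) : M = N := by
  ext i j
  · exact congrFun (congrFun h1 i) j
  · exact congrFun (congrFun h2 i) j

lemma central (hd : 3 ≤ d) (hE : Esub R d = ⊤) (g : SpecialLinearGroup (Fin d) R)
    (hg : g ∈ SLrel R d H) {i j : Fin d} (hij : i ≠ j) (c : R) :
    g * el hij c * g⁻¹ * (el hij c)⁻¹ ∈ EHsub R d H := by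
  have hg' : g⁻¹ ∈ SLrel R d H := inv_mem hg
  have key : ∀ (a b : SpecialLinearGroup (Fin d) R) (ha : a ∈ SLrel R d H)
      (hb : b ∈ SLrel R d H), a * b = 1 → lft H a ha * lft H b hb = 1 := by
    intro a b ha hb hab
    apply dbl_ext
    · rw [Matrix.map_mul, lft_p1, lft_p1]
      have e : (a : Matrix (Fin d) (Fin d) R) * (b : Matrix (Fin d) (Fin d) R) = 1 :=
        congrArg Subtype.val hab
      rw [e]; simp
    · rw [Matrix.map_mul, lft_p2, lft_p2]; simp
  obtain ⟨a, b, ha, hb, hab⟩ := dbl_rel H hE _ (suslin hd (lft H g hg) (lft H g⁻¹ hg')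
    (key _ _ _ _ (by simp)) (key _ _ _ _ (by simp)) i j hij ⟨(c, c), rfl⟩)
  rw [Matrix.map_mul, Matrix.map_mul, map_tr, lft_p1, lft_p1] at ha
  rw [Matrix.map_mul, Matrix.map_mul, map_tr, lft_p2, lft_p2, one_mul, mul_one] at hb
  have ea : a = g * el hij c * g⁻¹ := Subtype.ext ha
  have eb : b = el hij c := Subtype.ext hb
  rwa [ea, eb] at hab

lemma perfect (hd : 3 ≤ d) (hE : Esub R d = ⊤) :
    commutator (SpecialLinearGroup (Fin d) R) = ⊤ := by
  rw [eq_top_iff, ← hE, Esub, Subgroup.closure_le]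
  rintro M ⟨i, j, c, h, hM⟩
  obtain ⟨k, hk, hk'⟩ := exists_third hd i j
  have : M = ⁅el (Ne.symm hk) c, el hk' (1 : R)⁆ := by
    apply Subtype.ext
    rw [hM, commutatorElement_def, el_inv, el_inv]
    have := comm_id (Matrix.single i k c) (Matrix.single k j (1 : R))
      (by simp [hk]) (by simp [hk'.symm]) (by simp [h.symm])
    simp only [el, Matrix.transvection]
    simp only [Matrix.single_mul_single_same, mul_one] at this
    rw [← this, Matrix.single_neg, Matrix.single_neg]
    rfl
  rw [this]
  exact Subgroup.commutator_mem_commutator trivial trivial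

lemma finite_of_center {G : Type*} [Group G] [(Subgroup.center G).FiniteIndex]
    (h : commutator G = ⊤) : Finite G := by
  have : Finite (commutatorSet G) := by
    have hf : (Set.range fun p : (G ⧸ Subgroup.center G) × (G ⧸ Subgroup.center G) =>
      ⁅p.1.out, p.2.out⁆).Finite := Set.finite_range _
    refine (hf.subset ?_).to_subtype
    rintro _ ⟨a, b, rfl⟩
    refine ⟨(a, b), ?_⟩
    obtain ⟨x, hx⟩ := QuotientGroup.mk_out_eq_mul (Subgroup.center G) a
    obtain ⟨y, hy⟩ := QuotientGroup.mk_out_eq_mul (Subgroup.center G) b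
    have cx := Subgroup.mem_center_iff.1 x.2
    have cy := Subgroup.mem_center_iff.1 y.2
    simp only [hx, hy, commutatorElement_def, _root_.mul_inv_rev]
    generalize (x : G) = x at *
    generalize (y : G) = y at *
    have e1 : a * x * (b * y) = a * b * (y * x) := by
      rw [mul_assoc a x, ← cx (b * y)]; group
    have e2 : x⁻¹ * a⁻¹ * (y⁻¹ * b⁻¹) = (y * x)⁻¹ * (a⁻¹ * b⁻¹) := by
      have : a⁻¹ * y⁻¹ = y⁻¹ * a⁻¹ := by rw [← _root_.mul_inv_rev, ← _root_.mul_inv_rev, cy a]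
      rw [mul_assoc, ← mul_assoc a⁻¹, this]; group
    rw [mul_assoc, e1, e2]; group
  have h2 : Finite (commutator G) := inferInstance
  rw [h] at h2
  exact Finite.of_equiv _ Subgroup.topEquiv.toEquiv

end SKaux

open SKaux in
/-- If `H` is an ideal of finite index in a commutative ring `R`, `d ≥ 3`, and
`E_d(R) = SL_d(R)`, then `SK₁(R,H;d) = SL_d(R,H)/E_d(R,H)` is finite, i.e. `E_d(R,H)`
has finite index in `SL_d(R,H)`. -/
theorem SK1_finite (R : Type*) [CommRing R] (H : Ideal R) [Finite (R ⧸ H)]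
    (d : ℕ) (hd : 3 ≤ d) (hE : Esub R d = ⊤) :
    ((EHsub R d H).subgroupOf (SLrel R d H)).FiniteIndex := by
  have hN := EH_normal H hE
  have hfi : (SLrel R d H).FiniteIndex := by
    unfold SLrel
    infer_instance
  let q := QuotientGroup.mk' (EHsub R d H)
  have hq : Function.Surjective q := QuotientGroup.mk'_surjective _
  have hle : SLrel R d H ≤ (Subgroup.center (SpecialLinearGroup (Fin d) R ⧸ EHsub R d H)).comap q := by
    intro g hg
    rw [Subgroup.mem_comap]
    have : Esub R d ≤ (Subgroup.centralizer {q g}).comap q := by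
      rw [Esub, Subgroup.closure_le]
      rintro M ⟨i, j, c, h, hM⟩
      have hM' : M = el h c := Subtype.ext hM
      have hc := central H hd hE g hg h c
      rw [← QuotientGroup.eq_one_iff] at hc
      have hc' : q g * q (el h c) * (q g)⁻¹ * (q (el h c))⁻¹ = 1 := hc
      rw [mul_inv_eq_one, mul_inv_eq_iff_eq_mul] at hc'
      simp only [SetLike.mem_coe, Subgroup.mem_comap, Subgroup.mem_centralizer_singleton_iff, hM']
      first | exact hc' | exact hc'.symm
    rw [hE] at this
    rw [Subgroup.mem_center_iff]
    intro x
    obtain ⟨y, rfl⟩ := hq x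
    have hy := Subgroup.mem_centralizer_singleton_iff.1 (this (Subgroup.mem_top y))
    first | exact hy | exact hy.symm
  have h1 : ((Subgroup.center (SpecialLinearGroup (Fin d) R ⧸ EHsub R d H)).comap q).FiniteIndex :=
    Subgroup.finiteIndex_of_le hle
  have h2 : (Subgroup.center (SpecialLinearGroup (Fin d) R ⧸ EHsub R d H)).FiniteIndex := by
    constructor
    rw [← Subgroup.index_comap_of_surjective _ hq]
    exact h1.index_ne_zero
  have hp : commutator (SpecialLinearGroup (Fin d) R ⧸ EHsub R d H) = ⊤ := by
    have := perfect (R := R) hd hE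
    rw [commutator_def] at this ⊢
    rw [← Subgroup.map_top_of_surjective q hq, ← Subgroup.map_commutator, this]
  have h3 := finite_of_center hp
  have h4 : (EHsub R d H).FiniteIndex := Subgroup.finiteIndex_of_finite_quotient
  infer_instance
end

section
/- Let R be a commutative ring, H ◁ R an ideal of finite index, d ≥ 3, and assume E_d(R) = SL_d(R). Then SK₁(R, H; d) = SL_d(R,H)/E_d(R,H) is central in GL_d(R)/E_d(R,H). -/
open Matrix

lemma idem_exists {A : Type*} [CommRing A] [Finite A] (a : A) :
    ∃ f : A, f * f = f ∧ IsNilpotent (f * a) ∧ IsUnit (a - f) ∧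
      ∀ x b : A, a * x + b = 1 → IsUnit (a + f * b) := by
  obtain ⟨n, hn, he⟩ : ∃ n : ℕ, 0 < n ∧ a ^ n * a ^ n = a ^ n := by
    obtain ⟨i, j, hij, h⟩ : ∃ i j : ℕ, i < j ∧ a ^ i = a ^ j := by
      obtain ⟨i, j, hij, h⟩ := Finite.exists_ne_map_eq_of_infinite (fun n : ℕ => a ^ n)
      rcases lt_or_gt_of_ne hij with h1 | h1
      · exact ⟨i, j, h1, h⟩
      · exact ⟨j, i, h1, h.symm⟩
    obtain ⟨k, rfl⟩ := Nat.exists_eq_add_of_lt hij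
    have key : ∀ c m : ℕ, a ^ (i + m + c * (k + 1)) = a ^ (i + m) := by
      intro c
      induction c with
      | zero => intro m; simp
      | succ c ih =>
        intro m
        have : i + m + (c + 1) * (k + 1) = (i + k + 1) + (m + c * (k + 1)) := by ring
        rw [this, pow_add, ← h, ← pow_add, ← add_assoc, ih]
    refine ⟨(i + 1) * (k + 1), by positivity, ?_⟩
    have e : (i + 1) * (k + 1) = i + (i * k + k + 1) := by ring
    rw [← pow_add]
    conv_lhs => rw [show (i + 1) * (k + 1) + (i + 1) * (k + 1) =
      i + (i * k + k + 1) + (i + 1) * (k + 1) by ring]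
    rw [key, e]
  have hprime : ∀ m : Ideal A, m.IsMaximal → a ^ n ∈ m ∨ 1 - a ^ n ∈ m := by
    intro m hm
    apply hm.isPrime.mem_or_mem
    have : a ^ n * (1 - a ^ n) = 0 := by linear_combination -he
    rw [this]; exact m.zero_mem
  have hnot : ∀ m : Ideal A, m.IsMaximal → a ^ n ∈ m → 1 - a ^ n ∈ m → False := by
    intro m hm h1 h2
    apply hm.ne_top
    rw [Ideal.eq_top_iff_one]
    have := m.add_mem h1 h2
    simpa using this
  refine ⟨1 - a ^ n, by linear_combination he, ⟨n, ?_⟩, ?_, ?_⟩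
  · have : (1 - a ^ n) ^ n = 1 - a ^ n := by
      have hi : IsIdempotentElem (1 - a ^ n) := by
        unfold IsIdempotentElem; linear_combination he
      exact hi.pow_eq (by omega)
    rw [mul_pow, this]; linear_combination -he
  · by_contra hu
    obtain ⟨m, hm, hmem⟩ := exists_max_ideal_of_mem_nonunits hu
    rcases hprime m hm with h | h
    · have ha := hm.isPrime.mem_of_pow_mem n h
      apply hnot m hm h
      have := m.sub_mem ha hmem
      simpa using this
    · refine hnot m hm ?_ h
      have ha := m.add_mem hmem h
      rw [sub_add_cancel] at ha
      exact Ideal.pow_mem_of_mem m ha n hn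
  · intro x b hb
    by_contra hu
    obtain ⟨m, hm, hmem⟩ := exists_max_ideal_of_mem_nonunits hu
    rcases hprime m hm with h | h
    · have ha := hm.isPrime.mem_of_pow_mem n h
      have h2 : (1 - a ^ n) * b ∈ m := by
        have := m.sub_mem hmem ha
        simpa using this
      rcases hm.isPrime.mem_or_mem h2 with h3 | h3
      · exact hnot m hm h h3
      · apply hm.ne_top
        rw [Ideal.eq_top_iff_one, ← hb]
        exact m.add_mem (m.mul_mem_right _ ha) h3
    · refine hnot m hm ?_ h
      have ha := m.sub_mem hmem (m.mul_mem_right b h)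
      rw [add_sub_cancel_right] at ha
      exact Ideal.pow_mem_of_mem m ha n hn

section Vec
variable {R : Type*} [CommRing R] {d : ℕ}

/-- The transvection `1 + z tᵀ` with `t ⬝ z = 0`. -/
def tvm (z t : Fin d → R) (h : t ⬝ᵥ z = 0) : SpecialLinearGroup (Fin d) R :=
  ⟨1 + vecMulVec z t, by
    rw [vecMulVec_eq Unit, det_one_add_replicateCol_mul_replicateRow, h, add_zero]⟩

lemma tvm_act (z t : Fin d → R) (h : t ⬝ᵥ z = 0) (y : Fin d → R) :
    (tvm z t h).1 *ᵥ y = y + (t ⬝ᵥ y) • z := by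
  ext i
  simp [tvm, add_mulVec, vecMulVec_mulVec, mul_comm]

lemma sl_ext {g g' : SpecialLinearGroup (Fin d) R} (h : ∀ y, g.1 *ᵥ y = g'.1 *ᵥ y) : g = g' :=
  Subtype.ext (Matrix.ext_of_mulVec_single fun i => h _)

lemma sl_mul_act (g g' : SpecialLinearGroup (Fin d) R) (y : Fin d → R) :
    (g * g').1 *ᵥ y = g.1 *ᵥ (g'.1 *ᵥ y) := by
  rw [mulVec_mulVec]; rfl

lemma sl_inv_act (g : SpecialLinearGroup (Fin d) R) (y : Fin d → R) :
    (g⁻¹).1 *ᵥ (g.1 *ᵥ y) = y := by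
  rw [← sl_mul_act, inv_mul_cancel]; simp

lemma sl_act_inv (g : SpecialLinearGroup (Fin d) R) (y : Fin d → R) :
    g.1 *ᵥ ((g⁻¹).1 *ᵥ y) = y := by
  rw [← sl_mul_act, mul_inv_cancel]; simp

/-- elementary matrix -/
def el (i j : Fin d) (hij : i ≠ j) (c : R) : SpecialLinearGroup (Fin d) R :=
  tvm (Pi.single i c) (Pi.single j 1) (by simp [hij.symm])

lemma el_act (i j : Fin d) (hij : i ≠ j) (c : R) (y : Fin d → R) :
    (el i j hij c).1 *ᵥ y = y + Pi.single i (c * y j) := by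
  rw [el, tvm_act]
  ext k
  by_cases hk : k = i
  · subst hk; simp [mul_comm]
  · simp [hk]

lemma el_coe (i j : Fin d) (hij : i ≠ j) (c : R) :
    (el i j hij c).1 = Matrix.transvection i j c := by
  apply Matrix.ext_of_mulVec_single
  intro k
  rw [el_act]
  ext m
  simp only [transvection, Pi.add_apply, Pi.single_apply, mulVec_single_one, col_apply,
    Matrix.add_apply, Matrix.one_apply, Matrix.single_apply]
  by_cases h1 : m = i
  · by_cases h2 : j = k <;> simp [h1, h2]
  · simp [h1, Ne.symm h1]

lemma el_unique {i j : Fin d} (hij : i ≠ j) {c : R} {s : SpecialLinearGroup (Fin d) R}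
    (h : s.1 = Matrix.transvection i j c) : s = el i j hij c :=
  Subtype.ext (h.trans (el_coe i j hij c).symm)

variable {H : Ideal R}

lemma EH_normal (hE : Esub R d = ⊤) : (EHsub R d H).Normal := by
  constructor
  intro n hn g
  have : EHsub R d H ≤ (EHsub R d H).comap (MulAut.conj g).toMonoidHom := by
    conv_lhs => rw [EHsub]
    rw [Subgroup.closure_le]
    rintro M ⟨k, hk, s, hs, rfl⟩
    apply Subgroup.subset_closure
    refine ⟨g * k, by rw [hE]; trivial, s, hs, ?_⟩
    simp [mul_assoc]
  simpa using this hn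

lemma el_mem (i j : Fin d) (hij : i ≠ j) (c : R) (hc : Ideal.Quotient.mk H c = 0) :
    el i j hij c ∈ EHsub R d H := by
  apply Subgroup.subset_closure
  exact ⟨1, Subgroup.one_mem _, el i j hij c,
    ⟨i, j, c, hij, Ideal.Quotient.eq_zero_iff_mem.1 hc, el_coe i j hij c⟩, by simp⟩

lemma col_mem (l : Fin d) (z : Fin d → R) (h : Pi.single l 1 ⬝ᵥ z = 0)
    (hz : ∀ i, Ideal.Quotient.mk H (z i) = 0) : tvm z (Pi.single l 1) h ∈ EHsub R d H := by
  have key : ∀ s : Finset (Fin d), ∀ z : Fin d → R, ∀ h : Pi.single l 1 ⬝ᵥ z = 0,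
      (∀ i, Ideal.Quotient.mk H (z i) = 0) → (∀ i, i ∉ s → z i = 0) →
      tvm z (Pi.single l 1) h ∈ EHsub R d H := by
    intro s
    induction s using Finset.induction_on with
    | empty =>
      intro z h _ h0
      have : tvm z (Pi.single l 1) h = 1 := by
        apply sl_ext; intro y
        rw [tvm_act]
        have : z = 0 := by ext i; exact h0 i (by simp)
        simp [this]
      rw [this]; exact Subgroup.one_mem _
    | insert a s ha ih =>
      intro z h hz h0
      have hl : z l = 0 := by simpa using h
      by_cases hal : a = l
      · subst hal
        apply ih z h hz
        intro i hi
        by_cases hia : i = a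
        · rw [hia, hl]
        · exact h0 i (by simp [hia, hi])
      · have h' : Pi.single l 1 ⬝ᵥ (Function.update z a 0) = 0 := by
          simp [Function.update_apply, hl]
        have e : tvm z (Pi.single l 1) h =
            el a l hal (z a) * tvm (Function.update z a 0) (Pi.single l 1) h' := by
          apply sl_ext; intro y
          rw [sl_mul_act, el_act, tvm_act, tvm_act]
          ext k
          by_cases hk : k = a
          · subst hk; simp [hl, Ne.symm hal, mul_comm]
          · simp [hk]
        rw [e]
        refine Subgroup.mul_mem _ (el_mem _ _ _ _ (hz a)) (ih _ _ ?_ ?_)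
        · intro i
          by_cases hia : i = a
          · subst hia; simp
          · simp [hia, hz]
        · intro i hi
          by_cases hia : i = a
          · subst hia; simp
          · simp only [Function.update_of_ne hia]; exact h0 i (by simp [hia, hi])
  exact key Finset.univ z h hz (by simp)

lemma row_mem (l : Fin d) (t : Fin d → R) (h : t ⬝ᵥ Pi.single l 1 = 0)
    (ht : ∀ i, Ideal.Quotient.mk H (t i) = 0) : tvm (Pi.single l 1) t h ∈ EHsub R d H := by
  have key : ∀ s : Finset (Fin d), ∀ t : Fin d → R, ∀ h : t ⬝ᵥ Pi.single l 1 = 0,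
      (∀ i, Ideal.Quotient.mk H (t i) = 0) → (∀ i, i ∉ s → t i = 0) →
      tvm (Pi.single l 1) t h ∈ EHsub R d H := by
    intro s
    induction s using Finset.induction_on with
    | empty =>
      intro z h _ h0
      have : tvm (Pi.single l 1) z h = 1 := by
        apply sl_ext; intro y
        rw [tvm_act]
        have : z = 0 := by ext i; exact h0 i (by simp)
        simp [this]
      rw [this]; exact Subgroup.one_mem _
    | insert a s ha ih =>
      intro z h hz h0
      have hl : z l = 0 := by simpa using h
      by_cases hal : a = l
      · subst hal
        apply ih z h hz
        intro i hi
        by_cases hia : i = a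
        · rw [hia, hl]
        · exact h0 i (by simp [hia, hi])
      · have h' : (z - Pi.single a (z a)) ⬝ᵥ Pi.single l 1 = 0 := by
          simp [hl, Ne.symm hal]
        have e : tvm (Pi.single l 1) z h =
            el l a (Ne.symm hal) (z a) * tvm (Pi.single l 1) (z - Pi.single a (z a)) h' := by
          apply sl_ext; intro y
          rw [sl_mul_act, el_act, tvm_act, tvm_act]
          ext k
          by_cases hk : k = l
          · subst hk; simp [hal, sub_dotProduct]; ring
          · simp [hk]
        rw [e]
        refine Subgroup.mul_mem _ (el_mem _ _ _ _ (hz a)) (ih _ _ ?_ ?_)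
        · intro i
          by_cases hia : i = a
          · subst hia; simp
          · simp [hia, hz]
        · intro i hi
          by_cases hia : i = a
          · subst hia; simp
          · simp only [Pi.sub_apply, Pi.single_eq_of_ne hia, sub_zero]; exact h0 i (by simp [hia, hi])
  exact key Finset.univ t h ht (by simp)

/-- `x` and `y` lie in the same orbit of `E_d(R,H)`. -/
def eqv (H : Ideal R) (x y : Fin d → R) : Prop := ∃ n ∈ EHsub R d H, n.1 *ᵥ x = y

lemma eqv_refl (x : Fin d → R) : eqv H x x := ⟨1, Subgroup.one_mem _, by simp⟩

lemma eqv_symm {x y : Fin d → R} (h : eqv H x y) : eqv H y x := by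
  obtain ⟨n, hn, rfl⟩ := h
  exact ⟨n⁻¹, Subgroup.inv_mem _ hn, sl_inv_act _ _⟩

lemma eqv_trans {x y z : Fin d → R} (h : eqv H x y) (h' : eqv H y z) : eqv H x z := by
  obtain ⟨n, hn, rfl⟩ := h
  obtain ⟨m, hm, rfl⟩ := h'
  exact ⟨m * n, Subgroup.mul_mem _ hm hn, sl_mul_act _ _ _⟩

lemma eqv_act (hE : Esub R d = ⊤) (g : SpecialLinearGroup (Fin d) R) {x y : Fin d → R}
    (h : eqv H x y) : eqv H (g.1 *ᵥ x) (g.1 *ᵥ y) := by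
  obtain ⟨n, hn, rfl⟩ := h
  refine ⟨g * n * g⁻¹, (EH_normal hE).conj_mem n hn g, ?_⟩
  rw [sl_mul_act, sl_mul_act, sl_inv_act]

lemma eqv_col {l : Fin d} (z y : Fin d → R) (hl : z l = 0)
    (hz : ∀ i, Ideal.Quotient.mk H (z i) = 0) : eqv H y (y + y l • z) := by
  refine ⟨_, col_mem l z (by simpa using hl) hz, ?_⟩
  rw [tvm_act]; simp

lemma eqv_row {l : Fin d} (t y : Fin d → R) (hl : t l = 0)
    (ht : ∀ i, Ideal.Quotient.mk H (t i) = 0) : eqv H y (y + Pi.single l (t ⬝ᵥ y)) := by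
  refine ⟨_, row_mem l t (by simpa using hl) ht, ?_⟩
  rw [tvm_act]
  ext k
  by_cases hk : k = l
  · subst hk; simp
  · simp [hk]

/-- `C(z)` -/
def colM (l : Fin d) (z : Fin d → R) (hl : z l = 0) : SpecialLinearGroup (Fin d) R :=
  tvm z (Pi.single l 1) (by simpa using hl)

lemma colM_act (l : Fin d) (z : Fin d → R) (hl : z l = 0) (y : Fin d → R) :
    (colM l z hl).1 *ᵥ y = y + y l • z := by
  rw [colM, tvm_act]; simp

/-- `R(t)` -/
def rowM (l : Fin d) (t : Fin d → R) (hl : t l = 0) : SpecialLinearGroup (Fin d) R :=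
  tvm (Pi.single l 1) t (by simpa using hl)

lemma rowM_act (l : Fin d) (t : Fin d → R) (hl : t l = 0) (y : Fin d → R) :
    (rowM l t hl).1 *ᵥ y = y + Pi.single l (t ⬝ᵥ y) := by
  rw [rowM, tvm_act]
  ext k
  by_cases hk : k = l
  · subst hk; simp
  · simp [hk]

/-- Congruence mod `H`. -/
def cong (H : Ideal R) (x y : Fin d → R) : Prop :=
  ∀ i, Ideal.Quotient.mk H (x i) = Ideal.Quotient.mk H (y i)

lemma cong_act {x y : Fin d → R} (g : SpecialLinearGroup (Fin d) R) (h : cong H x y) :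
    cong H (g.1 *ᵥ x) (g.1 *ᵥ y) := by
  intro i
  have e : (Ideal.Quotient.mk H) ∘ x = (Ideal.Quotient.mk H) ∘ y := funext h
  simp only [mulVec, RingHom.map_dotProduct, e]

lemma EH_le_SLrel (hE : Esub R d = ⊤) : EHsub R d H ≤ SLrel R d H := by
  rw [EHsub, Subgroup.closure_le]
  rintro M ⟨g, -, s, ⟨i, j, c, hij, hc, hs⟩, rfl⟩
  have hn : (SLrel R d H).Normal := by unfold SLrel; infer_instance
  apply hn.conj_mem
  rw [SLrel, MonoidHom.mem_ker]
  apply Subtype.ext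
  change s.1.map (Ideal.Quotient.mk H) = (1 : Matrix (Fin d) (Fin d) (R ⧸ H))
  rw [hs]
  ext a b
  have hc' := Ideal.Quotient.eq_zero_iff_mem.2 hc
  simp only [transvection, Matrix.map_apply, Matrix.add_apply, Matrix.one_apply,
    Matrix.single_apply, map_add]
  split_ifs <;> simp [hc']

lemma SLrel_cong {a : SpecialLinearGroup (Fin d) R} (ha : a ∈ SLrel R d H) (y : Fin d → R) :
    cong H (a.1 *ᵥ y) y := by
  rw [SLrel, MonoidHom.mem_ker] at ha
  have h1 : a.1.map (Ideal.Quotient.mk H) = 1 := congrArg Subtype.val ha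
  intro i
  have := RingHom.map_mulVec (Ideal.Quotient.mk H) a.1 y i
  rw [this, h1]; simp

lemma eqv_cong (hE : Esub R d = ⊤) {x y : Fin d → R} (h : eqv H x y) : cong H x y := by
  obtain ⟨n, hn, rfl⟩ := h
  intro i
  exact (SLrel_cong (EH_le_SLrel hE hn) x i).symm

/-- Unimodularity mod `H` of the coordinates off `l`. -/
def unim (H : Ideal R) (l : Fin d) (y : Fin d → R) : Prop :=
  ∃ p : Fin d → R, p l = 0 ∧ Ideal.Quotient.mk H (p ⬝ᵥ y) = 1

lemma dot_cong {p y y' : Fin d → R} {l : Fin d} (hp : p l = 0)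
    (h : ∀ i, i ≠ l → Ideal.Quotient.mk H (y i) = Ideal.Quotient.mk H (y' i)) :
    Ideal.Quotient.mk H (p ⬝ᵥ y) = Ideal.Quotient.mk H (p ⬝ᵥ y') := by
  simp only [dotProduct, map_sum, map_mul]
  apply Finset.sum_congr rfl
  intro i _
  by_cases hi : i = l
  · subst hi; simp [hp]
  · rw [h i hi]

lemma unim_cong {l : Fin d} {y y' : Fin d → R} (hy : unim H l y)
    (h : ∀ i, i ≠ l → Ideal.Quotient.mk H (y i) = Ideal.Quotient.mk H (y' i)) : unim H l y' := by
  obtain ⟨p, hp, h1⟩ := hy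
  exact ⟨p, hp, by rw [← dot_cong hp h, h1]⟩

def std0 (H : Ideal R) (l : Fin d) (y : Fin d → R) : Prop :=
  unim H l y ∧ ∃ t : Fin d → R, t l = 0 ∧ y l = 1 + t ⬝ᵥ y

/-- block matrices -/
def isW (l : Fin d) (w : SpecialLinearGroup (Fin d) R) : Prop :=
  w.1 *ᵥ Pi.single l 1 = Pi.single l 1 ∧ ∀ y, (w.1 *ᵥ y) l = y l

lemma isW_mul {l : Fin d} {w w' : SpecialLinearGroup (Fin d) R} (h : isW l w) (h' : isW l w') :
    isW l (w * w') := by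
  refine ⟨?_, fun y => ?_⟩
  · rw [sl_mul_act, h'.1, h.1]
  · rw [sl_mul_act, h.2, h'.2]

lemma isW_inv {l : Fin d} {w : SpecialLinearGroup (Fin d) R} (h : isW l w) : isW l w⁻¹ := by
  refine ⟨?_, fun y => ?_⟩
  · conv_lhs => rw [← h.1]
    rw [sl_inv_act]
  · have := h.2 ((w⁻¹).1 *ᵥ y)
    rw [sl_act_inv] at this
    exact this.symm

lemma isW_tvm {l : Fin d} (z t : Fin d → R) (h : t ⬝ᵥ z = 0) (hz : z l = 0) (ht : t l = 0) :
    isW l (tvm z t h) := by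
  refine ⟨?_, fun y => ?_⟩
  · rw [tvm_act]; simp [ht]
  · rw [tvm_act]; simp [hz]

lemma isW_el {l i j : Fin d} (hij : i ≠ j) (hi : i ≠ l) (hj : j ≠ l) (c : R) :
    isW l (el i j hij c) :=
  isW_tvm _ _ _ (by simp [Ne.symm hi]) (by simp [Ne.symm hj])

lemma dot_inv (w : SpecialLinearGroup (Fin d) R) (p y : Fin d → R) :
    (p ᵥ* (w⁻¹).1) ⬝ᵥ (w.1 *ᵥ y) = p ⬝ᵥ y := by
  rw [← dotProduct_mulVec, sl_inv_act]

lemma vecMul_l {l : Fin d} {w : SpecialLinearGroup (Fin d) R} (hw : isW l w) (p : Fin d → R)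
    (hp : p l = 0) : (p ᵥ* (w⁻¹).1) l = 0 := by
  have : (p ᵥ* (w⁻¹).1) l = (p ᵥ* (w⁻¹).1) ⬝ᵥ Pi.single l 1 := by simp
  rw [this, ← hw.1, dot_inv]; simpa using hp

lemma std0_W {l : Fin d} {w : SpecialLinearGroup (Fin d) R} (hw : isW l w) {y : Fin d → R}
    (hy : std0 H l y) : std0 H l (w.1 *ᵥ y) := by
  obtain ⟨⟨p, hp, h1⟩, t, ht, h2⟩ := hy
  refine ⟨⟨p ᵥ* (w⁻¹).1, vecMul_l hw p hp, by rw [dot_inv, h1]⟩,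
    t ᵥ* (w⁻¹).1, vecMul_l hw t ht, by rw [dot_inv, hw.2, h2]⟩

variable [Finite (R ⧸ H)]

/-- Stable range one with a designated index. -/
lemma sr_index (j : Fin d) (y p : Fin d → R) (c : R)
    (h : Ideal.Quotient.mk H (p ⬝ᵥ y + c) = 1) :
    ∃ f u' : R, Ideal.Quotient.mk H ((y j + f * (p ⬝ᵥ y - p j * y j + c)) * u') = 1 := by
  obtain ⟨f, -, -, -, hf⟩ := idem_exists (Ideal.Quotient.mk H (y j))
  have := hf (Ideal.Quotient.mk H (p j)) (Ideal.Quotient.mk H (p ⬝ᵥ y - p j * y j + c)) (by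
    rw [← map_mul, ← map_add, ← h]; congr 1; ring)
  obtain ⟨f, rfl⟩ := Ideal.Quotient.mk_surjective f
  obtain ⟨u, hu⟩ := this.exists_right_inv
  obtain ⟨u, rfl⟩ := Ideal.Quotient.mk_surjective u
  exact ⟨f, u, by rw [← hu]; simp⟩

lemma W_trans (l a b : Fin d) (ha : a ≠ l) (hb : b ≠ l) (hab : a ≠ b) (v : Fin d → R)
    (hv : unim H l v) : ∃ w : SpecialLinearGroup (Fin d) R, isW l w ∧
      ∀ i, i ≠ l → Ideal.Quotient.mk H ((w.1 *ᵥ Pi.single a 1) i) = Ideal.Quotient.mk H (v i) := by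
  obtain ⟨p, hp, h1⟩ := hv
  obtain ⟨f, u', hu⟩ := sr_index b v p 0 (by simpa using h1)
  -- first step: make the `b` coordinate a unit
  let t1 : Fin d → R := f • (p - Pi.single b (p b))
  have ht1 : t1 ⬝ᵥ Pi.single b 1 = 0 := by simp [t1]
  have hw1 : isW l (tvm (Pi.single b 1) t1 ht1) :=
    isW_tvm _ _ _ (by simp [Ne.symm hb]) (by simp [t1, hp, Ne.symm hb])
  set w1 := tvm (Pi.single b 1) t1 ht1 with hw1d
  have hact : w1.1 *ᵥ v = v + Pi.single b (f * (p ⬝ᵥ v - p b * v b)) := by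
    rw [hw1d, tvm_act]
    ext k
    by_cases hk : k = b
    · subst hk; simp [t1, sub_dotProduct]
    · simp [hk]
  set v1 := w1.1 *ᵥ v with hv1
  have hu1 : Ideal.Quotient.mk H (v1 b * u') = 1 := by
    rw [← hu, hact]; simp
  -- second step
  let t2 : Fin d → R := Pi.single a 1 + Pi.single b ((1 - v1 a) * u')
  let z2 : Fin d → R := Function.update (Function.update v1 a (-((1 - v1 a) * u' * v1 b))) l 0
  have ht2 : t2 ⬝ᵥ z2 = 0 := by
    simp [t2, z2, add_dotProduct, ha, hb, Ne.symm hab]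
  refine ⟨w1⁻¹ * tvm z2 t2 ht2, isW_mul (isW_inv hw1) (isW_tvm _ _ _ (by simp [z2]) ?_), ?_⟩
  · simp [t2, Ne.symm ha, Ne.symm hb]
  have hc : ∀ i, i ≠ l → Ideal.Quotient.mk H (((tvm z2 t2 ht2).1 *ᵥ Pi.single a 1) i) =
      Ideal.Quotient.mk H (v1 i) := by
    intro i hi
    rw [tvm_act]
    by_cases hia : i = a
    · subst hia
      simp only [map_mul] at hu1
      simp [t2, z2, hi, hab]
      linear_combination (Ideal.Quotient.mk H (v1 i) - 1) * hu1
    · simp [t2, z2, hi, hia, hab]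
  set q := (tvm z2 t2 ht2).1 *ᵥ Pi.single a 1 with hq
  have hc2 : cong H q (v1 + Pi.single l (q l - v1 l)) := by
    intro i
    by_cases hi : i = l
    · subst hi; simp
    · rw [hc i hi]; simp [hi]
  intro i hi
  rw [sl_mul_act, ← hq, cong_act _ hc2 i, mulVec_add, hv1, sl_inv_act]
  have : (Pi.single l (q l - (w1.1 *ᵥ v) l) : Fin d → R) = (q l - (w1.1 *ᵥ v) l) • Pi.single l 1 := by
    ext k; simp [Pi.single_apply]
  rw [this, mulVec_smul, (isW_inv hw1).1]
  simp [hi]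

/-- Normal form of standard vectors. -/
lemma std0_nf (hE : Esub R d = ⊤) (l a : Fin d) (ha : a ≠ l) (y : Fin d → R) (hy : std0 H l y)
    (w : SpecialLinearGroup (Fin d) R) (hw : isW l w)
    (h : ∀ i, i ≠ l → Ideal.Quotient.mk H ((w.1 *ᵥ Pi.single a 1) i) = Ideal.Quotient.mk H (y i)) :
    ∃ s, eqv H y (w.1 *ᵥ (Pi.single a 1 + Pi.single l (1 + s))) ∧
      Ideal.Quotient.mk H (1 + s) = Ideal.Quotient.mk H (y l) := by
  obtain ⟨hu, t, ht, h2⟩ := hy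
  set q := w.1 *ᵥ Pi.single a 1 with hq
  have hql : q l = 0 := by rw [hq, hw.2]; simp [Ne.symm ha]
  refine ⟨t ⬝ᵥ q, ?_, ?_⟩
  · let y0 : Fin d → R := Function.update y l 1
    have hty : t ⬝ᵥ y0 = t ⬝ᵥ y := by
      simp only [dotProduct, y0]
      apply Finset.sum_congr rfl
      intro i _
      by_cases hi : i = l
      · subst hi; simp [ht]
      · simp [hi]
    have e1 : y = (rowM l t ht).1 *ᵥ y0 := by
      rw [rowM_act, hty]
      ext k
      by_cases hk : k = l
      · subst hk; simp [y0, h2]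
      · simp [y0, hk]
    have e2 : eqv H y0 (q + Pi.single l 1) := by
      have := eqv_col (H := H) (l := l) (q + Pi.single l 1 - y0) y0 (by simp [y0, hql]) (by
        intro i
        by_cases hi : i = l
        · subst hi; simp [y0, hql]
        · simp [y0, hi, h i hi])
      simpa [y0] using this
    have e3 := eqv_act hE (rowM l t ht) e2
    rw [← e1] at e3
    convert e3 using 1
    rw [rowM_act, mulVec_add, ← hq]
    have : (Pi.single l (1 + t ⬝ᵥ q) : Fin d → R) = (1 + t ⬝ᵥ q) • Pi.single l 1 := by
      ext k; simp [Pi.single_apply]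
    rw [this, mulVec_smul, hw.1, dotProduct_add]
    ext k
    by_cases hk : k = l
    · subst hk; simp [ht]; ring
    · simp [hk]
  · rw [h2, map_add, map_add, dot_cong ht h]

lemma std0_eqv (hE : Esub R d = ⊤) (l a b : Fin d) (ha : a ≠ l) (hb : b ≠ l) (hab : a ≠ b)
    {y y' : Fin d → R} (hy : std0 H l y) (hy' : std0 H l y') (h : cong H y y') : eqv H y y' := by
  obtain ⟨w, hw, hwv⟩ := W_trans l a b ha hb hab y hy.1
  obtain ⟨s, h1, h2⟩ := std0_nf hE l a ha y hy w hw hwv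
  obtain ⟨s', h1', h2'⟩ := std0_nf hE l a ha y' hy' w hw (fun i hi => by rw [hwv i hi, h i])
  refine eqv_trans h1 (eqv_trans (eqv_act hE w ?_) (eqv_symm h1'))
  have := eqv_row (H := H) (l := l) (Pi.single a (s' - s))
    (Pi.single a 1 + Pi.single l (1 + s)) (by simp [Ne.symm ha]) (by
      intro i
      by_cases hi : i = a
      · subst hi
        have e := h l
        rw [← h2, ← h2'] at e
        simp at e
        simp [e]
      · simp [hi])
  convert this using 1
  ext k
  by_cases hk : k = l
  · subst hk; simp [Ne.symm ha, ha]
  · simp [hk]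

lemma eqv_of_mk [(EHsub R d H).Normal] (hE : Esub R d = ⊤) {g g' : SpecialLinearGroup (Fin d) R}
    (h : (g : SpecialLinearGroup (Fin d) R ⧸ EHsub R d H) = g') (y : Fin d → R) :
    eqv H (g.1 *ᵥ y) (g'.1 *ᵥ y) := by
  rw [QuotientGroup.eq] at h
  have : g' = g * (g⁻¹ * g') := by group
  rw [this, sl_mul_act]
  exact eqv_act hE g ⟨_, h, rfl⟩

lemma el_mk_eq [(EHsub R d H).Normal] {i j : Fin d} (hij : i ≠ j) {a b : R}
    (h : Ideal.Quotient.mk H a = Ideal.Quotient.mk H b) :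
    (el i j hij a : SpecialLinearGroup (Fin d) R ⧸ EHsub R d H) = el i j hij b := by
  have e : el i j hij a = el i j hij b * el i j hij (a - b) := by
    apply sl_ext; intro y
    simp only [sl_mul_act, el_act]
    ext k
    by_cases hk : k = i
    · subst hk; simp [Ne.symm hij]; ring
    · simp [hk]
  rw [e, QuotientGroup.mk_mul, (QuotientGroup.eq_one_iff (el i j hij (a - b))).2, mul_one]
  exact el_mem _ _ _ _ (by simp [h])

lemma el_zero {i j : Fin d} (hij : i ≠ j) : el i j hij (0 : R) = 1 := by
  apply sl_ext; intro y; rw [el_act]; simp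

lemma comm_eqv (hE : Esub R d = ⊤) {j l k : Fin d} (hjl : j ≠ l) (hjk : j ≠ k) (hkl : k ≠ l)
    {f b : R} (hf : Ideal.Quotient.mk H (f * f) = Ideal.Quotient.mk H f)
    (hfb : Ideal.Quotient.mk H (f * b) = 0) (y : Fin d → R) :
    eqv H ((el j l hjl f).1 *ᵥ ((el l j hjl.symm b).1 *ᵥ y))
      ((el l j hjl.symm b).1 *ᵥ ((el j l hjl f).1 *ᵥ y)) := by
  haveI := EH_normal (H := H) hE
  rw [← sl_mul_act, ← sl_mul_act]
  apply eqv_of_mk hE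
  have c1 : Commute (el j k hjk f : SpecialLinearGroup (Fin d) R ⧸ EHsub R d H)
      (el l j hjl.symm b) := by
    have e : el l j hjl.symm b * el j k hjk f =
        el l k hkl.symm (f * b) * (el j k hjk f * el l j hjl.symm b) := by
      apply sl_ext; intro y
      simp only [sl_mul_act, el_act]
      ext m
      by_cases hm : m = l
      · subst hm; simp [Ne.symm hjl, hjl, Ne.symm hkl, hjk, Ne.symm hjk, hkl]; ring
      · simp [hm, hkl]
    have e' := congrArg (QuotientGroup.mk (s := EHsub R d H)) e
    simp only [QuotientGroup.mk_mul] at e'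
    rw [el_mk_eq (b := 0) hkl.symm (by simpa using hfb), el_zero, QuotientGroup.mk_one, one_mul] at e'
    exact e'.symm
  have c2 : Commute (el k l hkl f : SpecialLinearGroup (Fin d) R ⧸ EHsub R d H)
      (el l j hjl.symm b) := by
    have e : el k l hkl f * el l j hjl.symm b =
        el k j hjk.symm (f * b) * (el l j hjl.symm b * el k l hkl f) := by
      apply sl_ext; intro y
      simp only [sl_mul_act, el_act]
      ext m
      by_cases hm : m = k
      · subst hm; simp [Ne.symm hjl, hjl, Ne.symm hkl, hjk, Ne.symm hjk, hkl]; ring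
      · by_cases hm' : m = l
        · subst hm'; simp [Ne.symm hjl, hjl, Ne.symm hkl, hjk, Ne.symm hjk, hkl]
        · simp [hm, hm']
    have e' := congrArg (QuotientGroup.mk (s := EHsub R d H)) e
    simp only [QuotientGroup.mk_mul] at e'
    rw [el_mk_eq (b := 0) hjk.symm (by simpa using hfb), el_zero, QuotientGroup.mk_one, one_mul] at e'
    exact e'
  have c3 : el j l hjl (f * f) = el j k hjk f * el k l hkl f * (el j k hjk f)⁻¹ * (el k l hkl f)⁻¹ := by
    rw [eq_mul_inv_iff_mul_eq, eq_mul_inv_iff_mul_eq]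
    apply sl_ext; intro y
    simp only [sl_mul_act, el_act]
    ext m
    by_cases hm : m = j
    · subst hm; simp [Ne.symm hjl, hjl, Ne.symm hkl, hjk, Ne.symm hjk, hkl]; ring
    · by_cases hm' : m = k
      · subst hm'; simp [Ne.symm hjl, hjl, Ne.symm hkl, hjk, Ne.symm hjk, hkl]
      · simp [hm, hm']
  have c4 : Commute (el j l hjl f : SpecialLinearGroup (Fin d) R ⧸ EHsub R d H)
      (el l j hjl.symm b) := by
    rw [← el_mk_eq hjl hf, c3]
    simp only [QuotientGroup.mk_mul, QuotientGroup.mk_inv]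
    exact ((c1.mul_left c2).mul_left c1.inv_left).mul_left c2.inv_left
  simp only [QuotientGroup.mk_mul]
  exact c4

/-- Basic step with an idempotent. -/
lemma idem_step (hE : Esub R d = ⊤) (l a b : Fin d) (ha : a ≠ l) (hb : b ≠ l) (hab : a ≠ b)
    {x y' t : Fin d → R} (hx : std0 H l x) (hy' : std0 H l y') {f : R}
    (hf : Ideal.Quotient.mk H (f * f) = Ideal.Quotient.mk H f)
    (ht : t l = 0) (htx : Ideal.Quotient.mk H (x l) = Ideal.Quotient.mk H (1 + t ⬝ᵥ x))
    (hft : Ideal.Quotient.mk H (f * t b) = 0)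
    (hc : cong H (x + Pi.single b (f * x l)) y') :
    eqv H (x + Pi.single b (f * x l)) y' := by
  let x0 : Fin d → R := Function.update x l 1
  have hdot : ∀ p : Fin d → R, p l = 0 → p ⬝ᵥ x0 = p ⬝ᵥ x := by
    intro p hp
    simp only [dotProduct, x0]
    apply Finset.sum_congr rfl
    intro i _
    by_cases hi : i = l
    · subst hi; simp [hp]
    · simp [hi]
  let t' : Fin d → R := t - Pi.single b (t b)
  have ht' : t' l = 0 := by simp [t', ht, Ne.symm hb]
  -- `x2 = R(t) x0`
  let x2 : Fin d → R := (el l b hb.symm (t b)).1 *ᵥ ((rowM l t' ht').1 *ᵥ x0)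
  have hm : t' ⬝ᵥ x = t ⬝ᵥ x - t b * x b := by simp [t', sub_dotProduct]
  have hx2 : x2 = Function.update x l (1 + t ⬝ᵥ x) := by
    simp only [x2, rowM_act, el_act, hdot t' ht', hm]
    ext k
    by_cases hk : k = l
    · subst hk; simp [x0, hb]; ring
    · simp [x0, hk]
  have hdot2 : ∀ p : Fin d → R, p l = 0 → p ⬝ᵥ x2 = p ⬝ᵥ x := by
    intro p hp
    rw [hx2]
    simp only [dotProduct]
    apply Finset.sum_congr rfl
    intro i _
    by_cases hi : i = l
    · subst hi; simp [hp]
    · simp [hi]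
  have hx2s : std0 H l x2 := by
    obtain ⟨⟨p, hp, h1⟩, -⟩ := hx
    refine ⟨⟨p, hp, by rw [hdot2 p hp, h1]⟩, t, ht, ?_⟩
    rw [hdot2 t ht, hx2]; simp
  have e1 : eqv H x x2 := by
    apply std0_eqv hE l a b ha hb hab hx hx2s
    intro i
    rw [hx2]
    by_cases hi : i = l
    · subst hi; simpa using htx
    · simp [hi]
  have e2 := eqv_act hE (el b l hb f) e1
  rw [el_act] at e2
  have e3 := comm_eqv hE hb (Ne.symm hab) ha hf hft ((rowM l t' ht').1 *ᵥ x0)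
  have e4 := eqv_trans e2 e3
  refine eqv_trans e4 ?_
  have hcc : cong H ((el l b hb.symm (t b)).1 *ᵥ ((el b l hb f).1 *ᵥ ((rowM l t' ht').1 *ᵥ x0))) y' := by
    intro i
    rw [← hc i]
    exact (eqv_cong hE e4 i).symm
  apply std0_eqv hE l a b ha hb hab _ hy' hcc
  refine ⟨unim_cong hy'.1 (fun i _ => (hcc i).symm), t, ht, ?_⟩
  simp only [rowM_act, el_act, hdot t' ht', dotProduct_add, hdot t ht, hm]
  simp [x0, ht, hb]
  ring

/-- Lemma B, for a vector in normal form. -/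
lemma shift_nf (hE : Esub R d = ⊤) (l a b : Fin d) (ha : a ≠ l) (hb : b ≠ l) (hab : a ≠ b)
    (s : R) (z : Fin d → R) (hz : z l = 0) (y' : Fin d → R) (hy' : std0 H l y')
    (hc : cong H (Pi.single a 1 + Pi.single l (1 + s) + (1 + s) • z) y') :
    eqv H (Pi.single a 1 + Pi.single l (1 + s) + (1 + s) • z) y' := by
  obtain ⟨f, hf, hnil, hu, -⟩ := idem_exists (Ideal.Quotient.mk H (z b))
  obtain ⟨f, rfl⟩ := Ideal.Quotient.mk_surjective f
  obtain ⟨u', hu'⟩ := hu.exists_right_inv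
  obtain ⟨u', rfl⟩ := Ideal.Quotient.mk_surjective u'
  let u := z b - f
  have huu : Ideal.Quotient.mk H (u * u') = 1 := by simp [u, hu']
  let y : Fin d → R := Pi.single a 1 + Pi.single l (1 + s)
  have hyl : y l = 1 + s := by simp [y, Ne.symm ha]
  let z1 : Fin d → R := z - Pi.single b f
  let e : Fin d → R := Pi.single a (z a * (u * u') - z a)
  let x : Fin d → R := y + (1 + s) • (z1 + e)
  have hxl : x l = 1 + s := by simp [x, hyl, z1, e, hz, Ne.symm ha, Ne.symm hb]
  have hxb : x b = (1 + s) * u := by simp [x, y, z1, e, hab, Ne.symm hab, hb, u]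
  have hxa : x a = 1 + (1 + s) * (z a * (u * u')) := by simp [x, y, z1, e, hab, ha]; ring
  have h1 : eqv H (y + (1 + s) • z1) x := by
    have := eqv_col (H := H) (l := l) e (y + (1 + s) • z1) (by simp [e, Ne.symm ha]) (by
      intro i
      by_cases hi : i = a
      · subst hi; simp only [e, Pi.single_eq_same, map_sub, map_mul] at huu ⊢
        rw [huu]; simp
      · simp [e, hi])
    convert this using 1
    ext k
    simp [x, hyl, z1, hz, Ne.symm hb]
    ring
  have hxs : std0 H l x := by
    refine ⟨⟨Pi.single a 1 - Pi.single b (z a * u'), by simp [Ne.symm ha, Ne.symm hb], ?_⟩,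
      Pi.single a s - Pi.single b (s * z a * u'), by simp [Ne.symm ha, Ne.symm hb], ?_⟩
    · rw [sub_dotProduct, single_dotProduct, single_dotProduct, hxa, hxb, ← map_one (Ideal.Quotient.mk H)]
      congr 1; ring
    · rw [sub_dotProduct, single_dotProduct, single_dotProduct, hxa, hxb, hxl]
      ring
  have h2 : eqv H (y + (1 + s) • z) (x + Pi.single b (f * x l)) := by
    have := eqv_act hE (el b l hb f) h1
    rw [el_act, el_act] at this
    convert this using 1
    ext k
    by_cases hk : k = b
    · subst hk; simp [hyl, z1, hz, Ne.symm hb]; ring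
    · simp [hk, z1]
  refine eqv_trans h2 ?_
  have hc2 : cong H (x + Pi.single b (f * x l)) y' := by
    intro i
    rw [← hc i]
    exact (eqv_cong hE h2 i).symm
  obtain ⟨⟨p, hp, hp1⟩, -⟩ := id hy'
  have hpx : Ideal.Quotient.mk H (p ⬝ᵥ x + p b * (f * (1 + s))) = 1 := by
    rw [← hp1, ← dot_cong hp (fun i _ => hc2 i), dotProduct_add p x, hxl, dotProduct_single]
  obtain ⟨θ, hθ⟩ : ∃ θ : R, Ideal.Quotient.mk H ((1 - f * z b * (p b * (1 + s))) * θ) = 1 := by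
    have hn : IsNilpotent (Ideal.Quotient.mk H (f * z b * (p b * (1 + s)))) := by
      rw [map_mul]
      apply Commute.isNilpotent_mul_right (Commute.all _ _)
      simpa using hnil
    obtain ⟨θ, hθ⟩ := hn.isUnit_one_sub.exists_right_inv
    obtain ⟨θ, rfl⟩ := Ideal.Quotient.mk_surjective θ
    exact ⟨θ, by simpa using hθ⟩
  let t : Fin d → R := s • ((θ * f + (1 - f)) • p - Pi.single b (θ * f * p b))
  refine idem_step hE l a b ha hb hab (t := t) hxs hy' (by simpa using hf) ?_ ?_ ?_ hc2
  · simp [t, hp, Ne.symm hb]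
  · have : t ⬝ᵥ x = s * ((θ * f + (1 - f)) * (p ⬝ᵥ x) - θ * f * p b * x b) := by
      simp [t, sub_dotProduct]
    rw [hxl, this, hxb]
    simp only [u, map_add, map_mul, map_sub, map_one] at hpx hθ hf ⊢
    generalize Ideal.Quotient.mk H (p ⬝ᵥ x) = X at *
    generalize Ideal.Quotient.mk H f = F at *
    generalize Ideal.Quotient.mk H θ = T at *
    generalize Ideal.Quotient.mk H s = S at *
    generalize Ideal.Quotient.mk H (p b) = P at *
    generalize Ideal.Quotient.mk H (z b) = Z at *
    grind
  · simp only [t, Pi.smul_apply, Pi.sub_apply, Pi.single_eq_same, smul_eq_mul, map_add, map_mul,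
      map_sub, map_one] at hf ⊢
    linear_combination (-Ideal.Quotient.mk H s * Ideal.Quotient.mk H (p b)) * hf

lemma shift (hE : Esub R d = ⊤) (l a b : Fin d) (ha : a ≠ l) (hb : b ≠ l) (hab : a ≠ b)
    (z : Fin d → R) (hz : z l = 0) (y y' : Fin d → R) (hy : std0 H l y) (hy' : std0 H l y')
    (hc : cong H (y + y l • z) y') : eqv H (y + y l • z) y' := by
  obtain ⟨w, hw, hwv⟩ := W_trans l a b ha hb hab y hy.1
  obtain ⟨s, h1, h2⟩ := std0_nf hE l a ha y hy w hw hwv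
  have hwi := isW_inv hw
  have hz' : ((w⁻¹).1 *ᵥ z) l = 0 := by rw [hwi.2, hz]
  have h3 := eqv_act hE (colM l z hz) h1
  rw [colM_act, colM_act] at h3
  set y0 : Fin d → R := Pi.single a 1 + Pi.single l (1 + s) with hy0
  have hy0l : y0 l = 1 + s := by simp [hy0, Ne.symm ha]
  have e : w.1 *ᵥ y0 + (w.1 *ᵥ y0) l • z = w.1 *ᵥ (y0 + (1 + s) • ((w⁻¹).1 *ᵥ z)) := by
    rw [mulVec_add w.1 y0, mulVec_smul, sl_act_inv, hw.2, hy0l]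
  rw [e] at h3
  refine eqv_trans h3 ?_
  have hy'w := std0_W hwi hy'
  have hcc : cong H (y0 + (1 + s) • ((w⁻¹).1 *ᵥ z)) ((w⁻¹).1 *ᵥ y') := by
    have : cong H (w.1 *ᵥ (y0 + (1 + s) • ((w⁻¹).1 *ᵥ z))) y' := fun i => by
      rw [← hc i]; exact (eqv_cong hE h3 i).symm
    have := cong_act w⁻¹ this
    rwa [sl_inv_act] at this
  have := eqv_act hE w (shift_nf hE l a b ha hb hab s _ hz' _ hy'w hcc)
  rwa [sl_act_inv] at this


/-- Vectors `C(z) y` with `y` of type `std0`. -/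
def std (H : Ideal R) (l : Fin d) (s : Fin d → R) : Prop :=
  ∃ z y : Fin d → R, z l = 0 ∧ std0 H l y ∧ s = y + y l • z

lemma std_eqv (hE : Esub R d = ⊤) (l a b : Fin d) (ha : a ≠ l) (hb : b ≠ l) (hab : a ≠ b)
    {s s' : Fin d → R} (hs : std H l s) (hs' : std H l s') (hc : cong H s s') : eqv H s s' := by
  obtain ⟨z, y, hz, hy, rfl⟩ := hs
  obtain ⟨z', y', hz', hy', rfl⟩ := hs'
  have hl : Ideal.Quotient.mk H (y l) = Ideal.Quotient.mk H (y' l) := by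
    have := hc l
    simpa [hz, hz'] using this
  have h1 : eqv H (y + y l • (z - z')) y' := by
    apply shift hE l a b ha hb hab _ (by simp [hz, hz']) _ _ hy hy'
    intro i
    have := hc i
    simp only [Pi.add_apply, Pi.smul_apply, smul_eq_mul, map_add, map_mul, Pi.sub_apply,
      map_sub] at this ⊢
    rw [hl] at this ⊢
    linear_combination this
  have h2 := eqv_act hE (colM l z' hz') h1
  rw [colM_act, colM_act] at h2
  convert h2 using 1
  ext k
  simp [hz, hz']
  ring

lemma exists_std0 {l : Fin d} {y : Fin d → R} (hy : unim H l y) :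
    ∃ y', std0 H l y' ∧ cong H y y' := by
  obtain ⟨p, hp, h1⟩ := id hy
  let t : Fin d → R := (y l - 1) • p
  have ht : t l = 0 := by simp [t, hp]
  let y' : Fin d → R := Function.update y l (1 + t ⬝ᵥ y)
  have hdot : t ⬝ᵥ y' = t ⬝ᵥ y := by
    simp only [dotProduct, y']
    apply Finset.sum_congr rfl
    intro i _
    by_cases hi : i = l
    · subst hi; simp [ht]
    · simp [hi]
  refine ⟨y', ⟨unim_cong hy (fun i hi => by simp [y', hi]), t, ht, ?_⟩, ?_⟩
  · rw [hdot]; simp [y']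
  · intro i
    by_cases hi : i = l
    · subst hi; simp [y', t, h1]
    · simp [y', hi]

lemma std0_row {l i : Fin d} (hli : l ≠ i) (r : R) {x : Fin d → R} (hx : std0 H l x) :
    std0 H l ((el l i hli r).1 *ᵥ x) := by
  obtain ⟨hu, t, ht, h⟩ := hx
  refine ⟨unim_cong hu (fun k hk => by rw [el_act]; simp [hk]), t + Pi.single i r,
    by simp [ht, hli], ?_⟩
  rw [el_act, dotProduct_add, add_dotProduct, add_dotProduct]
  simp [ht, hli, h]
  ring

/-- Vectors equivalent to a standard one. -/
def orb (H : Ideal R) (l : Fin d) (x : Fin d → R) : Prop := ∃ s, std H l s ∧ eqv H s x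

lemma orb_el (hE : Esub R d = ⊤) (l a b : Fin d) (ha : a ≠ l) (hb : b ≠ l) (hab : a ≠ b)
    (i j : Fin d) (hij : i ≠ j) (r : R) {x : Fin d → R} (hx : orb H l x) :
    orb H l ((el i j hij r).1 *ᵥ x) := by
  obtain ⟨s, hs, hsx⟩ := hx
  suffices h : orb H l ((el i j hij r).1 *ᵥ s) by
    obtain ⟨s', h1, h2⟩ := h
    exact ⟨s', h1, eqv_trans h2 (eqv_act hE _ hsx)⟩
  by_cases hjl : j = l
  · subst hjl
    obtain ⟨z, y, hz, hy, rfl⟩ := hs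
    refine ⟨_, ⟨z + Pi.single i r, y, by simp [hz, Ne.symm hij], hy, rfl⟩, ?_⟩
    convert eqv_refl _ using 1
    rw [el_act]
    ext k
    by_cases hk : k = i
    · subst hk; simp [hz]; ring
    · simp [hk]
  by_cases hil : i = l
  · subst hil
    obtain ⟨m, hmi, hmj⟩ : ∃ m, m ≠ i ∧ m ≠ j := by
      by_cases haj : a = j
      · exact ⟨b, hb, fun h => hab (haj.trans h.symm)⟩
      · exact ⟨a, ha, haj⟩
    obtain ⟨z, y, hz, ⟨⟨p, hp, h1⟩, hy⟩, hsd⟩ := id hs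
    have hsl : s i = y i := by rw [hsd]; simp [hz]
    have hps : p ⬝ᵥ s = p ⬝ᵥ y + y i * (p ⬝ᵥ z) := by
      rw [hsd, dotProduct_add, dotProduct_smul, smul_eq_mul]
    obtain ⟨f, u', hu⟩ := sr_index m s p (-(s i * (p ⬝ᵥ z))) (by
      have e0 : p ⬝ᵥ s + -(s i * (p ⬝ᵥ z)) = p ⬝ᵥ y := by rw [hps, hsl]; ring
      rw [e0, h1])
    let μ : R := -(f * (p ⬝ᵥ z))
    let s2 : Fin d → R := s + s i • Pi.single m μ
    have hs2 : unim H i s2 := by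
      refine ⟨u' • (Pi.single m 1 + f • (p - Pi.single m (p m))), by simp [hp, Ne.symm hmi], ?_⟩
      rw [← hu]
      congr 1
      simp only [s2, smul_dotProduct, add_dotProduct, sub_dotProduct, single_dotProduct,
        dotProduct_add, dotProduct_smul, dotProduct_single, Pi.add_apply, Pi.smul_apply,
        Pi.sub_apply, Pi.single_eq_same, smul_eq_mul, μ]
      ring
    obtain ⟨y', hy', hc⟩ := exists_std0 hs2
    have hsi : s2 i = s i := by simp [s2, Ne.symm hmi]
    have e1 : eqv H s (y' + y' i • Pi.single m (-μ)) := by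
      apply std_eqv hE i a b ha hb hab hs ⟨_, y', by simp [Ne.symm hmi], hy', rfl⟩
      have hi := hc i
      rw [hsi] at hi
      intro k
      have hk := hc k
      simp only [Pi.add_apply, Pi.smul_apply, smul_eq_mul, map_add, map_mul, ← hi, ← hk, s2]
      by_cases hkm : k = m
      · subst hkm; simp
      · simp [hkm]
    refine ⟨_, ⟨Pi.single m (-μ), (el i j hij r).1 *ᵥ ((el m j hmj (μ * r)).1 *ᵥ y'),
      by simp [Ne.symm hmi], std0_row hij r (std0_W (isW_el hmj hmi hjl _) hy'), rfl⟩, ?_⟩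
    have e2 := eqv_act hE (el i j hij r) e1
    convert eqv_symm e2 using 1
    simp only [el_act]
    ext k
    by_cases hkm : k = m
    · subst hkm; simp [hmi, Ne.symm hmi, hmj, Ne.symm hmj]; ring
    · by_cases hki : k = i
      · subst hki; simp [hmi, Ne.symm hmi, hmj, Ne.symm hmj]
      · simp [hki, hkm]
  · obtain ⟨z, y, hz, hy, rfl⟩ := hs
    have hw := isW_el hij hil hjl r
    refine ⟨_, ⟨(el i j hij r).1 *ᵥ z, (el i j hij r).1 *ᵥ y, by rw [hw.2, hz], std0_W hw hy, rfl⟩, ?_⟩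
    convert eqv_refl _ using 1
    rw [mulVec_add, mulVec_smul, hw.2]

lemma el_inv {i j : Fin d} (hij : i ≠ j) (c : R) : (el i j hij c)⁻¹ = el i j hij (-c) := by
  rw [inv_eq_iff_mul_eq_one]
  apply sl_ext; intro y
  rw [sl_mul_act, el_act, el_act]
  ext k
  by_cases hk : k = i
  · subst hk; simp [Ne.symm hij]
  · simp [hk]

lemma orb_all (hE : Esub R d = ⊤) (l a b : Fin d) (ha : a ≠ l) (hb : b ≠ l) (hab : a ≠ b)
    (g : SpecialLinearGroup (Fin d) R) : ∀ x : Fin d → R, orb H l x → orb H l (g.1 *ᵥ x) := by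
  have hg : g ∈ Esub R d := by rw [hE]; trivial
  rw [Esub] at hg
  induction hg using Subgroup.closure_induction'' with
  | mem x hx =>
    obtain ⟨i, j, c, hij, h⟩ := hx
    rw [el_unique hij h]
    intro x hx
    exact orb_el hE l a b ha hb hab i j hij c hx
  | inv_mem x hx =>
    obtain ⟨i, j, c, hij, h⟩ := hx
    rw [el_unique hij h, el_inv]
    intro x hx
    exact orb_el hE l a b ha hb hab i j hij _ hx
  | one => intro x hx; simpa using hx
  | mul x y _ _ h1 h2 =>
    intro v hv
    rw [sl_mul_act]
    exact h1 _ (h2 _ hv)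

lemma fix_vec (hE : Esub R d = ⊤) (l a b : Fin d) (ha : a ≠ l) (hb : b ≠ l) (hab : a ≠ b)
    {g : SpecialLinearGroup (Fin d) R} (hg : g ∈ SLrel R d H) :
    ∃ n ∈ EHsub R d H, (n * g).1 *ᵥ Pi.single l 1 = Pi.single l 1 := by
  have hst : std H l (Pi.single l 1 : Fin d → R) := by
    refine ⟨-Pi.single a 1, Pi.single a 1 + Pi.single l 1, by simp [Ne.symm ha],
      ⟨⟨Pi.single a 1, by simp [Ne.symm ha], by simp [ha]⟩, 0, rfl, by simp [Ne.symm ha]⟩, ?_⟩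
    ext k
    simp [Ne.symm ha]
  obtain ⟨s, hs, n, hn, h⟩ := orb_all (H := H) hE l a b ha hb hab g _ ⟨_, hst, eqv_refl _⟩
  have hc : cong H s (Pi.single l 1) := by
    intro i
    rw [eqv_cong hE ⟨n, hn, h⟩ i, SLrel_cong hg _ i]
  obtain ⟨m, hm, h'⟩ := eqv_trans (eqv_symm ⟨n, hn, h⟩) (std_eqv hE l a b ha hb hab hs hst hc)
  exact ⟨m, hm, by rw [sl_mul_act, h']⟩

lemma reduce (hE : Esub R d = ⊤) (l a b : Fin d) (ha : a ≠ l) (hb : b ≠ l) (hab : a ≠ b)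
    {g : SpecialLinearGroup (Fin d) R} (hg : g ∈ SLrel R d H) :
    ∃ n ∈ EHsub R d H, ∃ c ∈ SLrel R d H, isW l c ∧ g = n * c := by
  obtain ⟨n, hn, h⟩ := fix_vec hE l a b ha hb hab hg
  have hq : n * g ∈ SLrel R d H := Subgroup.mul_mem _ (EH_le_SLrel hE hn) hg
  set q := n * g with hqd
  let t : Fin d → R := fun i => (Pi.single l 1 : Fin d → R) i - q.1 l i
  have hent : ∀ i k, (q.1 *ᵥ Pi.single k 1) i = q.1 i k := fun i k => by simp
  have ht : t l = 0 := by
    have := congrFun h l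
    rw [hent] at this
    simp [t, this]
  have htH : ∀ i, Ideal.Quotient.mk H (t i) = 0 := by
    intro i
    have := SLrel_cong hq (Pi.single i 1) l
    rw [hent] at this
    simp only [t, map_sub, this, Pi.single_apply]
    by_cases hi : i = l
    · simp [hi]
    · simp [hi, Ne.symm hi]
  have hdot : ∀ y, t ⬝ᵥ y = y l - (q.1 *ᵥ y) l := by
    intro y
    have : t = Pi.single l 1 - q.1 l := rfl
    rw [this, sub_dotProduct, single_dotProduct, one_mul]
    rfl
  have hρ : rowM l t ht ∈ EHsub R d H := row_mem _ _ _ htH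
  have hs : ∀ r : R, (Pi.single l r : Fin d → R) = r • Pi.single l 1 := by
    intro r; ext k; simp [Pi.single_apply]
  refine ⟨n⁻¹ * (q * (rowM l t ht)⁻¹ * q⁻¹), Subgroup.mul_mem _ (Subgroup.inv_mem _ hn)
    ((EH_normal hE).conj_mem _ (Subgroup.inv_mem _ hρ) _), q * rowM l t ht,
    Subgroup.mul_mem _ hq (EH_le_SLrel hE hρ), ⟨?_, ?_⟩, by rw [hqd]; group⟩
  · rw [sl_mul_act, rowM_act]
    simp only [dotProduct_single, ht, zero_mul, Pi.single_zero, add_zero, h]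
  · intro y
    rw [sl_mul_act, rowM_act, hs, mulVec_add, mulVec_smul, h, hdot]
    simp

lemma block_comm (hE : Esub R d = ⊤) (l : Fin d) {c : SpecialLinearGroup (Fin d) R}
    (hc : c ∈ SLrel R d H) (hw : isW l c) [(EHsub R d H).Normal]
    (g : SpecialLinearGroup (Fin d) R) :
    Commute (g : SpecialLinearGroup (Fin d) R ⧸ EHsub R d H) c := by
  have hs : ∀ (i : Fin d) (r : R), (Pi.single i r : Fin d → R) = r • Pi.single i 1 := by
    intro i r; ext k; simp [Pi.single_apply]
  have hcol : ∀ (i : Fin d) (hil : i ≠ l) (r : R),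
      Commute (el i l hil r : SpecialLinearGroup (Fin d) R ⧸ EHsub R d H) c := by
    intro i hil r
    let z : Fin d → R := r • (c.1 *ᵥ Pi.single i 1 - Pi.single i 1)
    have hz : z l = 0 := by simp only [z, Pi.smul_apply, Pi.sub_apply, hw.2]; simp
    have hzH : colM l z hz ∈ EHsub R d H := col_mem _ _ _ (fun k => by
      have := SLrel_cong hc (Pi.single i 1) k
      simp only [z, Pi.smul_apply, Pi.sub_apply, smul_eq_mul, map_mul, map_sub, this]; simp)
    have e : c * el i l hil r = colM l z hz * (el i l hil r * c) := by
      apply sl_ext; intro y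
      simp only [sl_mul_act, el_act, colM_act]
      rw [hs i (r * y l), hs i (r * (c.1 *ᵥ y) l), mulVec_add, mulVec_smul, hw.2]
      have : (c.1 *ᵥ y + (r * y l) • (Pi.single i 1 : Fin d → R)) l = y l := by
        simp [Ne.symm hil, hw.2]
      rw [this]
      simp only [z]
      module
    have e' := congrArg (QuotientGroup.mk (s := EHsub R d H)) e
    simp only [QuotientGroup.mk_mul] at e'
    rw [(QuotientGroup.eq_one_iff _).2 hzH, one_mul] at e'
    exact e'.symm
  have hrow : ∀ (i : Fin d) (hil : l ≠ i) (r : R),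
      Commute (el l i hil r : SpecialLinearGroup (Fin d) R ⧸ EHsub R d H) c := by
    intro i hil r
    let t : Fin d → R := r • (c.1 i - Pi.single i 1)
    have hent : ∀ i k, (c.1 *ᵥ Pi.single k 1) i = c.1 i k := fun i k => by simp
    have ht : t l = 0 := by
      have := congrFun hw.1 i
      rw [hent] at this
      simp [t, this, hil, Ne.symm hil]
    have htH : rowM l t ht ∈ EHsub R d H := row_mem _ _ _ (fun k => by
      have := SLrel_cong hc (Pi.single k 1) i
      rw [hent] at this
      simp only [t, Pi.smul_apply, Pi.sub_apply, smul_eq_mul, map_mul, map_sub, this]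
      by_cases hk : k = i
      · subst hk; simp
      · simp [hk, Ne.symm hk])
    have hdot : ∀ y, t ⬝ᵥ y = r * ((c.1 *ᵥ y) i - y i) := by
      intro y
      simp only [t]
      rw [smul_dotProduct, sub_dotProduct, single_dotProduct, one_mul]
      rfl
    have e : el l i hil r * c = c * el l i hil r * rowM l t ht := by
      apply sl_ext; intro y
      simp only [sl_mul_act, el_act, rowM_act]
      rw [hs l (r * (c.1 *ᵥ y) i), hs l (t ⬝ᵥ y), hs l (r * (_ : R)), mulVec_add, mulVec_add, mulVec_smul, mulVec_smul, hw.1, hdot]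
      have : (y + (r * ((c.1 *ᵥ y) i - y i)) • (Pi.single l 1 : Fin d → R)) i = y i := by
        simp [Ne.symm hil]
      rw [this]
      module
    have e' := congrArg (QuotientGroup.mk (s := EHsub R d H)) e
    simp only [QuotientGroup.mk_mul] at e'
    rw [(QuotientGroup.eq_one_iff _).2 htH, mul_one] at e'
    exact e'
  have hg : g ∈ Esub R d := by rw [hE]; trivial
  rw [Esub] at hg
  induction hg using Subgroup.closure_induction with
  | mem x hx =>
    obtain ⟨i, j, r, hij, h⟩ := hx
    rw [el_unique hij h]
    by_cases hjl : j = l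
    · subst hjl; exact hcol i hij r
    by_cases hil : i = l
    · subst hil; exact hrow j hij r
    have e : el i j hij r = el i l hil r * el l j (Ne.symm hjl) 1 * (el i l hil r)⁻¹ *
        (el l j (Ne.symm hjl) 1)⁻¹ := by
      rw [eq_mul_inv_iff_mul_eq, eq_mul_inv_iff_mul_eq]
      apply sl_ext; intro y
      simp only [sl_mul_act, el_act]
      ext m
      by_cases hm : m = i
      · subst hm; simp [hij, Ne.symm hij, hil, Ne.symm hil, hjl, Ne.symm hjl]; ring
      · by_cases hm' : m = l
        · subst hm'; simp [hij, Ne.symm hij, hil, Ne.symm hil, hjl, Ne.symm hjl]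
        · simp [hm, hm']
    rw [e]
    simp only [QuotientGroup.mk_mul, QuotientGroup.mk_inv]
    exact (((hcol i hil r).mul_left (hrow j _ 1)).mul_left (hcol i hil r).inv_left).mul_left
      (hrow j _ 1).inv_left
  | one => exact Commute.one_left _
  | mul x y _ _ h1 h2 => rw [QuotientGroup.mk_mul]; exact h1.mul_left h2
  | inv x _ h => rw [QuotientGroup.mk_inv]; exact h.inv_left

/-- diagonal matrix in `GL` -/
def dg (v : Fin d → Rˣ) : GL (Fin d) R :=
  ⟨diagonal (fun i => (v i : R)), diagonal (fun i => ((v i)⁻¹ : Rˣ).val),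
    by rw [diagonal_mul_diagonal]; simp, by rw [diagonal_mul_diagonal]; simp⟩

lemma sl_of_det (g : GL (Fin d) R) (h : g.1.det = 1) :
    ∃ s : SpecialLinearGroup (Fin d) R, g = SpecialLinearGroup.toGL s :=
  ⟨⟨g.1, h⟩, Units.ext rfl⟩

lemma dg_conj (v : Fin d → Rˣ) {i j : Fin d} (hij : i ≠ j) (c : R) :
    dg v * SpecialLinearGroup.toGL (el i j hij c) * (dg v)⁻¹ =
      SpecialLinearGroup.toGL (el i j hij ((v i : R) * c * ((v j)⁻¹ : Rˣ).val)) := by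
  rw [mul_inv_eq_iff_eq_mul]
  apply Units.ext
  change diagonal _ * (el i j hij c).1 = (el i j hij _).1 * diagonal _
  rw [el_coe, el_coe]
  ext a b
  rw [diagonal_mul, mul_diagonal]
  simp only [transvection, Matrix.add_apply, Matrix.one_apply, Matrix.single_apply]
  by_cases h1 : i = a ∧ j = b
  · obtain ⟨rfl, rfl⟩ := h1
    simp [hij, mul_assoc]
  · simp only [h1, if_false, add_zero]
    by_cases h2 : a = b
    · subst h2; simp
    · simp [h2]

lemma gl_conj_sl (g : GL (Fin d) R) (s : SpecialLinearGroup (Fin d) R) :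
    ∃ s' : SpecialLinearGroup (Fin d) R,
      g * SpecialLinearGroup.toGL s * g⁻¹ = SpecialLinearGroup.toGL s' := by
  apply sl_of_det
  have : (g * SpecialLinearGroup.toGL s * g⁻¹).1.det =
    ((GeneralLinearGroup.det (g * SpecialLinearGroup.toGL s * g⁻¹) : Rˣ) : R) := rfl
  rw [this, map_mul, map_mul, map_inv, mul_right_comm, mul_inv_cancel, one_mul]
  exact s.2

lemma gl_decomp (l : Fin d) (g : GL (Fin d) R) :
    ∃ (s : SpecialLinearGroup (Fin d) R) (u : Rˣ),
      g = SpecialLinearGroup.toGL s * dg (Pi.mulSingle l u) := by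
  let u := GeneralLinearGroup.det g
  have hD : GeneralLinearGroup.det (dg (Pi.mulSingle l u)) = u := by
    apply Units.ext
    change (diagonal _ : Matrix (Fin d) (Fin d) R).det = _
    rw [det_diagonal, ← Units.coe_prod]
    simp
  obtain ⟨s, hs⟩ := sl_of_det (g * (dg (Pi.mulSingle l u))⁻¹) (by
    have : (g * (dg (Pi.mulSingle l u))⁻¹).1.det =
      ((GeneralLinearGroup.det (g * (dg (Pi.mulSingle l u))⁻¹) : Rˣ) : R) := rfl
    rw [this, map_mul, map_inv, hD]
    simp [u])
  exact ⟨s, u, by rw [← hs]; group⟩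

lemma N_normal (hE : Esub R d = ⊤) (l : Fin d) :
    (Subgroup.map (SpecialLinearGroup.toGL (n := Fin d) (R := R)) (EHsub R d H)).Normal := by
  have hdg : ∀ v : Fin d → Rˣ, ∀ n ∈ EHsub R d H, dg v * SpecialLinearGroup.toGL n * (dg v)⁻¹ ∈
      Subgroup.map (SpecialLinearGroup.toGL (n := Fin d) (R := R)) (EHsub R d H) := by
    intro v
    have : EHsub R d H ≤ ((Subgroup.map (SpecialLinearGroup.toGL (n := Fin d) (R := R))
        (EHsub R d H)).comap (MulAut.conj (dg v)).toMonoidHom).comap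
        (SpecialLinearGroup.toGL (n := Fin d) (R := R)) := by
      conv_lhs => rw [EHsub]
      rw [Subgroup.closure_le]
      rintro M ⟨k, hk, s, ⟨i, j, c, hij, hc, hs⟩, rfl⟩
      rw [el_unique hij hs]
      obtain ⟨k', hk'⟩ := gl_conj_sl (dg v) k
      change dg v * SpecialLinearGroup.toGL (k * el i j hij c * k⁻¹) * (dg v)⁻¹ ∈
        Subgroup.map (SpecialLinearGroup.toGL (n := Fin d) (R := R)) (EHsub R d H)
      refine ⟨k' * el i j hij ((v i : R) * c * ((v j)⁻¹ : Rˣ).val) * k'⁻¹,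
        (EH_normal hE).conj_mem _ (el_mem _ _ _ _ ?_) _, ?_⟩
      · simp [Ideal.Quotient.eq_zero_iff_mem.2 hc]
      · simp only [map_mul, map_inv]
        rw [← hk', ← dg_conj v hij c]
        group
    intro n hn
    exact this hn
  constructor
  rintro _ ⟨n, hn, rfl⟩ g
  obtain ⟨s, u, rfl⟩ := gl_decomp l g
  obtain ⟨m, hm, h⟩ := hdg (Pi.mulSingle l u) n hn
  refine ⟨s * m * s⁻¹, (EH_normal hE).conj_mem _ hm _, ?_⟩
  rw [map_mul, map_mul, h, map_inv]
  group

lemma dg_comm (l : Fin d) (u : Rˣ) {c : SpecialLinearGroup (Fin d) R} (hw : isW l c) :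
    Commute (dg (Pi.mulSingle l u)) (SpecialLinearGroup.toGL c) := by
  apply Units.ext
  change diagonal _ * c.1 = c.1 * diagonal _
  have hD : ∀ y : Fin d → R, diagonal (fun i => ((Pi.mulSingle l u : Fin d → Rˣ) i : R)) *ᵥ y =
      y + ((u - 1 : R) * y l) • Pi.single l 1 := by
    intro y
    ext k
    rw [mulVec_diagonal]
    by_cases hk : k = l
    · subst hk; simp; ring
    · simp [hk]
  apply Matrix.ext_of_mulVec_single
  intro i
  rw [← mulVec_mulVec, ← mulVec_mulVec, hD, hD, mulVec_add, mulVec_smul, hw.1, hw.2]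

end Vec
/-- If `H` has finite index in `R`, `d ≥ 3`, and `E_d(R) = SL_d(R)`, then
`SK₁(R,H;d) = SL_d(R,H)/E_d(R,H)` is central in `GL_d(R)/E_d(R,H)`: every commutator
of an element of `SL_d(R,H)` with an element of `GL_d(R)` lies in `E_d(R,H)`. -/
theorem SK1_central_in_GL (R : Type*) [CommRing R] (H : Ideal R) [Finite (R ⧸ H)]
    (d : ℕ) (hd : 3 ≤ d) (hE : Esub R d = ⊤) :
    ∀ a : SpecialLinearGroup (Fin d) R, a ∈ SLrel R d H →
      ∀ g : GL (Fin d) R,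
        g * SpecialLinearGroup.toGL a * g⁻¹ * (SpecialLinearGroup.toGL a)⁻¹ ∈
          Subgroup.map (SpecialLinearGroup.toGL (n := Fin d) (R := R)) (EHsub R d H) := by

  intro a ha g
  let l : Fin d := ⟨0, by omega⟩
  let p : Fin d := ⟨1, by omega⟩
  let q : Fin d := ⟨2, by omega⟩
  obtain ⟨n, hn, c, hc, hw, rfl⟩ := reduce hE l p q (by simp [l, p]) (by simp [l, q])
    (by simp [p, q]) ha
  haveI := EH_normal (H := H) hE
  haveI hN := N_normal (H := H) hE l
  set N := Subgroup.map (SpecialLinearGroup.toGL (n := Fin d) (R := R)) (EHsub R d H) with hNd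
  obtain ⟨s, u, rfl⟩ := gl_decomp l g
  have h1 : Commute (SpecialLinearGroup.toGL s : GL (Fin d) R ⧸ N) (SpecialLinearGroup.toGL c) := by
    have := block_comm hE l hc hw s
    have h2 : (s * c)⁻¹ * (c * s) ∈ EHsub R d H := QuotientGroup.eq.1 this
    have h3 : (SpecialLinearGroup.toGL s * SpecialLinearGroup.toGL c)⁻¹ *
        (SpecialLinearGroup.toGL c * SpecialLinearGroup.toGL s) ∈ N :=
      ⟨_, h2, by simp only [map_mul, map_inv]⟩
    exact QuotientGroup.eq.2 h3
  have h2 : Commute (dg (Pi.mulSingle l u) : GL (Fin d) R ⧸ N) (SpecialLinearGroup.toGL c) := by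
    have := congrArg (QuotientGroup.mk (s := N)) (dg_comm l u hw).eq
    exact this
  have h3 : ((SpecialLinearGroup.toGL n : GL (Fin d) R) : GL (Fin d) R ⧸ N) = 1 :=
    (QuotientGroup.eq_one_iff _).2 ⟨n, hn, rfl⟩
  have h4 := h1.mul_left h2
  rw [← QuotientGroup.eq_one_iff]
  simp only [map_mul, QuotientGroup.mk_mul, QuotientGroup.mk_inv, h3, one_mul]
  rw [h4.eq, mul_inv_cancel_right, mul_inv_cancel]
end
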